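/- arXiv:2401.08489 — 2 statements merged into one kernel-verified Lean document; each statement's English description precedes it below -/
import Mathlib

section
/- Let μ and ν be dominant integral weights of 𝔤 such that β := ν̄ − μ is a root, and suppose ⟨μ, α_j∨⟩ ≥ 2 for every simple root α_j. Then the 𝔤-invariant subspace of adj(𝔤) ⊗ V_μ ⊗ V_ν has dimension exactly 1. -/
open scoped TensorProduct Classical
open LieAlgebra LieModule Module

namespace AdjPaper

variable {L : Type} [LieRing L] [LieAlgebra ℂ L]

/-- `χ` is a root of `L` relative to the Cartan subalgebra `H`: a nonzero linear functional
on `H` with nontrivial root space. -/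
def IsRoot (H : LieSubalgebra ℂ L) [H.IsCartanSubalgebra] (χ : Module.Dual ℂ H) : Prop :=
  χ ≠ 0 ∧ rootSpace H ⇑χ ≠ ⊥

/-- `t` is the coroot `χ∨` of the root `χ`: it lies in `⁅𝔤_χ, 𝔤_{-χ}⁆` and satisfies
`χ t = 2`. -/
def IsCoroot (H : LieSubalgebra ℂ L) [H.IsCartanSubalgebra] (χ : Module.Dual ℂ H) (t : H) : Prop :=
  χ t = 2 ∧ ∃ e ∈ rootSpace H ⇑χ, ∃ f ∈ rootSpace H ⇑(-χ), (t : L) = ⁅e, f⁆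

/-- `α` enumerates the simple roots of a base of the root system of `(L, H)`. -/
structure IsBase (H : LieSubalgebra ℂ L) [H.IsCartanSubalgebra] {r : ℕ} (α : Fin r → Module.Dual ℂ H) : Prop where
  isRoot : ∀ j, IsRoot H (α j)
  indep : LinearIndependent ℂ α
  pos_neg : ∀ χ : Module.Dual ℂ H, IsRoot H χ →
    (∃ c : Fin r → ℕ, χ = ∑ j, (c j : ℂ) • α j) ∨ (∃ c : Fin r → ℕ, χ = -∑ j, (c j : ℂ) • α j)

/-- `χ` is a positive root relative to the base `α`. -/
def IsPosRoot (H : LieSubalgebra ℂ L) [H.IsCartanSubalgebra] {r : ℕ} (α : Fin r → Module.Dual ℂ H)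
    (χ : Module.Dual ℂ H) : Prop :=
  IsRoot H χ ∧ ∃ c : Fin r → ℕ, χ = ∑ j, (c j : ℂ) • α j

/-- A weight `μ` is dominant integral: all its pairings `⟨μ, α_j∨⟩ = μ (hc j)` with the
simple coroots `hc j` are non-negative integers. -/
def IsDomInt {H : LieSubalgebra ℂ L} {r : ℕ} (hc : Fin r → H) (μ : Module.Dual ℂ H) : Prop :=
  ∀ j, ∃ n : ℕ, μ (hc j) = (n : ℂ)

/-- `V` is an irreducible `L`-module with highest weight `μ` (relative to the Cartan
subalgebra `H` and the base `α`): it is irreducible and possesses a nonzero vector of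
`H`-weight `μ` annihilated by all positive root spaces. -/
def IsHWIrrep (H : LieSubalgebra ℂ L) [H.IsCartanSubalgebra] {r : ℕ} (α : Fin r → Module.Dual ℂ H)
    (μ : Module.Dual ℂ H) (V : Type) [AddCommGroup V] [Module ℂ V]
    [LieRingModule L V] [LieModule ℂ L V] : Prop :=
  IsSimpleOrder (LieSubmodule ℂ L V) ∧
  ∃ v : V, v ≠ 0 ∧ (∀ x : H, ⁅(x : L), v⁆ = μ x • v) ∧
    ∀ χ : Module.Dual ℂ H, IsPosRoot H α χ → ∀ e ∈ rootSpace H ⇑χ, ⁅e, v⁆ = 0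

/-- `W` is isomorphic to the dual representation `V*`: there is a nondegenerate
`𝔤`-invariant pairing `W × V → ℂ`. -/
def IsDualPair (W V : Type) [AddCommGroup W] [Module ℂ W] [LieRingModule L W]
    [AddCommGroup V] [Module ℂ V] [LieRingModule L V] : Prop :=
  ∃ B : W →ₗ[ℂ] V →ₗ[ℂ] ℂ,
    (∀ w, (∀ v, B w v = 0) → w = 0) ∧ (∀ v, (∀ w, B w v = 0) → v = 0) ∧
    ∀ (x : L) (w : W) (v : V), B ⁅x, w⁆ v + B w ⁅x, v⁆ = 0

/-- `V` is an orthogonal representation: it has a nondegenerate invariant symmetric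
bilinear form. -/
def IsOrthogonalRep (V : Type) [AddCommGroup V] [Module ℂ V] [LieRingModule L V] : Prop :=
  ∃ B : V →ₗ[ℂ] V →ₗ[ℂ] ℂ,
    (∀ v w, B v w = B w v) ∧ (∀ v, (∀ w, B v w = 0) → v = 0) ∧
    ∀ (x : L) (v w : V), B ⁅x, v⁆ w + B v ⁅x, w⁆ = 0

/-- `V` is a symplectic representation: it has a nondegenerate invariant alternating
bilinear form. -/
def IsSymplecticRep (V : Type) [AddCommGroup V] [Module ℂ V] [LieRingModule L V] : Prop :=
  ∃ B : V →ₗ[ℂ] V →ₗ[ℂ] ℂ,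
    (∀ v, B v v = 0) ∧ (∀ v, (∀ w, B v w = 0) → v = 0) ∧
    ∀ (x : L) (v w : V), B ⁅x, v⁆ w + B v ⁅x, w⁆ = 0

variable (L) in
/-- The operator on `adj(𝔤) ⊗ V ⊗ V` exchanging the two copies of `V`. -/
noncomputable def swapMap (V : Type) [AddCommGroup V] [Module ℂ V] :
    (L ⊗[ℂ] (V ⊗[ℂ] V)) →ₗ[ℂ] (L ⊗[ℂ] (V ⊗[ℂ] V)) :=
  LinearMap.lTensor L (TensorProduct.comm ℂ V V).toLinearMap

variable (L) in
/-- The `𝔤`-invariant subspace of `adj(𝔤) ⊗ S²V`, realised inside `adj(𝔤) ⊗ V ⊗ V` as the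
invariant vectors fixed by the swap of the two copies of `V`. -/
noncomputable def symSquareInvariants (V : Type) [AddCommGroup V] [Module ℂ V]
    [LieRingModule L V] [LieModule ℂ L V] : Submodule ℂ (L ⊗[ℂ] (V ⊗[ℂ] V)) :=
  (maxTrivSubmodule ℂ L (L ⊗[ℂ] (V ⊗[ℂ] V)) : Submodule ℂ (L ⊗[ℂ] (V ⊗[ℂ] V))) ⊓
    LinearMap.ker (swapMap L V - LinearMap.id)

variable (L) in
/-- The `𝔤`-invariant subspace of `adj(𝔤) ⊗ Λ²V`, realised inside `adj(𝔤) ⊗ V ⊗ V` as the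
invariant vectors anti-fixed by the swap of the two copies of `V`. -/
noncomputable def altSquareInvariants (V : Type) [AddCommGroup V] [Module ℂ V]
    [LieRingModule L V] [LieModule ℂ L V] : Submodule ℂ (L ⊗[ℂ] (V ⊗[ℂ] V)) :=
  (maxTrivSubmodule ℂ L (L ⊗[ℂ] (V ⊗[ℂ] V)) : Submodule ℂ (L ⊗[ℂ] (V ⊗[ℂ] V))) ⊓
    LinearMap.ker (swapMap L V + LinearMap.id)

/-!
Write `U = V_μ*`, and let `Y` be a finite-dimensional representation; the adjoint one is the case
of interest. The invariants of `Y ⊗ V_μ ⊗ V_ν` are the homomorphisms from `V_ν̄ = V_ν*` to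
`Hom(U, Y)`, that is, the singular vectors of weight `ν̄` in `Hom(U, Y)`. Such a vector is a linear
map commuting with the raising operators, so it is determined by its value at the lowest weight
vector `ξ` of `U`, which lies in the weight space `Y_{ν̄ - μ}`. Conversely `x ∈ Y_{ν̄ - μ}` is such
a value as soon as every noncommutative polynomial `a` in the raising operators with `a ξ = 0`
also satisfies `a x = 0`; so the multiplicity is `dim Y_{ν̄ - μ}` once this is known.

Exchange raising and lowering operators: let `v` be a highest weight vector of weight `μ`, and let
`a v = 0` with `a` homogeneous of weight `-γ`. On a singular vector `y` of weight `κ` the Casimir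
operator gives `(c(κ) - c(κ - γ)) a y = ∑ i, F_i E_i a y`, where `c(κ) = ⟨κ, κ + 2ρ⟩`, and each
`E_i a y` equals `a_i y` for a polynomial `a_i` of lower degree than `a`. For `κ = k μ` everything
is polynomial in `k`, so the identity holds in the quotient of the free algebra by the polynomials
killing the singular vectors of every weight `k μ`. These act as zero on every finite-dimensional
representation, so for `κ = μ` the identity also holds at `x`. The bound
`χ(α_j∨) ≤ μ(α_j∨) + 1` on the weights `χ` of `Y`, which for the adjoint representation follows
from `χ(α_j∨) ≤ 3`, makes the scalar nonzero, and `a x = 0` follows by induction on the degree.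
-/

section Words

variable {ι : Type}

/-- The monomial of the free algebra attached to a list of generators. -/
noncomputable def word (w : List ι) : FreeAlgebra ℂ ι :=
  (w.map (FreeAlgebra.ι ℂ)).prod

@[simp] lemma word_nil : word ([] : List ι) = 1 := rfl

@[simp] lemma word_cons (j : ι) (w : List ι) : word (j :: w) = FreeAlgebra.ι ℂ j * word w := by
  simp [word]

lemma basisFreeMonoid_apply (w : FreeMonoid ι) :
    FreeAlgebra.basisFreeMonoid ℂ ι w = word w.toList := by
  simp [FreeAlgebra.basisFreeMonoid, FreeAlgebra.equivMonoidAlgebraFreeMonoid,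
    FreeMonoid.lift_apply, word]

lemma span_range_word : Submodule.span ℂ (Set.range (word (ι := ι))) = ⊤ := by
  have : Set.range (word (ι := ι)) = Set.range (FreeAlgebra.basisFreeMonoid ℂ ι) := by
    rw [funext basisFreeMonoid_apply]
    exact (FreeMonoid.toList.surjective.range_comp word).symm
  rw [this, Basis.span_eq]

lemma linearMap_ext_word {M : Type*} [AddCommMonoid M] [Module ℂ M]
    {S T : FreeAlgebra ℂ ι →ₗ[ℂ] M} (h : ∀ w, S (word w) = T (word w)) : S = T :=
  LinearMap.ext_on span_range_word (Set.forall_mem_range.2 h)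

/-- The span of the monomials in which each generator occurs as often as in `s`. -/
noncomputable def homogeneous (s : Multiset ι) : Submodule ℂ (FreeAlgebra ℂ ι) :=
  Submodule.span ℂ {a | ∃ w : List ι, (w : Multiset ι) = s ∧ a = word w}

lemma word_mem_homogeneous (w : List ι) : word w ∈ homogeneous (w : Multiset ι) :=
  Submodule.subset_span ⟨w, rfl, rfl⟩

lemma homogeneous_zero : homogeneous (0 : Multiset ι) = ℂ ∙ (1 : FreeAlgebra ℂ ι) := by
  rw [homogeneous]
  congr 1
  ext a
  simp

/-- The noncommutative polynomials of degree less than `n`. -/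
noncomputable def degreeLT (n : ℕ) : Submodule ℂ (FreeAlgebra ℂ ι) :=
  ⨆ (s : Multiset ι) (_ : s.card < n), homogeneous s

lemma homogeneous_le_degreeLT {s : Multiset ι} {n : ℕ} (h : s.card < n) :
    homogeneous s ≤ degreeLT n :=
  le_iSup₂ (f := fun (s : Multiset ι) (_ : s.card < n) ↦ homogeneous s) s h

lemma degreeLT_eq_span (n : ℕ) :
    degreeLT n = Submodule.span ℂ (word '' {w : List ι | w.length < n}) := by
  refine le_antisymm (iSup₂_le fun s hs ↦ Submodule.span_mono ?_) (Submodule.span_le.2 ?_)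
  · rintro _ ⟨w, hw, rfl⟩
    exact ⟨w, by simpa [← hw] using hs, rfl⟩
  · rintro _ ⟨w, hw, rfl⟩
    exact homogeneous_le_degreeLT (by simpa using hw) (word_mem_homogeneous w)

lemma word_mem_degreeLT {w : List ι} {n : ℕ} (h : w.length < n) : word w ∈ degreeLT n :=
  degreeLT_eq_span (ι := ι) n ▸ Submodule.subset_span ⟨w, h, rfl⟩

lemma degreeLT_le_iff {n : ℕ} {S : Submodule ℂ (FreeAlgebra ℂ ι)} :
    degreeLT n ≤ S ↔ ∀ w : List ι, w.length < n → word w ∈ S := by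
  rw [degreeLT_eq_span, Submodule.span_le, Set.image_subset_iff]
  rfl

lemma degreeLT_mono : Monotone (degreeLT (ι := ι)) := fun _ _ h ↦
  degreeLT_le_iff.2 fun _ hw ↦ word_mem_degreeLT (hw.trans_le h)

lemma exists_mem_degreeLT (a : FreeAlgebra ℂ ι) : ∃ n, a ∈ degreeLT n := by
  have ha : a ∈ Submodule.span ℂ (Set.range (word (ι := ι))) := span_range_word ▸ Submodule.mem_top
  induction ha using Submodule.span_induction with
  | mem a ha =>
    obtain ⟨w, rfl⟩ := ha
    exact ⟨w.length + 1, word_mem_degreeLT (Nat.lt_succ_self _)⟩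
  | zero => exact ⟨0, zero_mem _⟩
  | add a b _ _ ha hb =>
    obtain ⟨m, hm⟩ := ha
    obtain ⟨n, hn⟩ := hb
    exact ⟨max m n, add_mem (degreeLT_mono (le_max_left m n) hm)
      (degreeLT_mono (le_max_right m n) hn)⟩
  | smul c a _ ha => exact ha.imp fun _ hn ↦ Submodule.smul_mem _ c hn

lemma ι_mul_mem_degreeLT {j : ι} {a : FreeAlgebra ℂ ι} {n : ℕ} (ha : a ∈ degreeLT n) :
    FreeAlgebra.ι ℂ j * a ∈ degreeLT (n + 1) := by
  suffices degreeLT n ≤ (degreeLT (n + 1)).comap (LinearMap.mulLeft ℂ (FreeAlgebra.ι ℂ j)) from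
    this ha
  exact degreeLT_le_iff.2 fun w hw ↦ by
    simpa using word_mem_degreeLT (w := j :: w) (Nat.succ_lt_succ hw)

variable (C : Matrix ι ι ℤ)

/-- If `e i` kills a vector `y` on which `h i` acts by `t`, then moving `e i` to the right through
the word `w` in the lowering operators gives `⁅e i, w y⁆ = (raiseWord C i t w) y`. -/
noncomputable def raiseWord (i : ι) (t : ℂ) : List ι → FreeAlgebra ℂ ι
  | [] => 0
  | j :: w => FreeAlgebra.ι ℂ j * raiseWord i t w +
      if i = j then (t - (w.map fun l ↦ (C l i : ℂ)).sum) • word w else 0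

/-- The linear extension of `raiseWord` to noncommutative polynomials. -/
noncomputable def raise (i : ι) (t : ℂ) : FreeAlgebra ℂ ι →ₗ[ℂ] FreeAlgebra ℂ ι :=
  (FreeAlgebra.basisFreeMonoid ℂ ι).constr ℂ fun w ↦ raiseWord C i t w.toList

@[simp] lemma raise_word (i : ι) (t : ℂ) (w : List ι) :
    raise C i t (word w) = raiseWord C i t w := by
  have := (FreeAlgebra.basisFreeMonoid ℂ ι).constr_basis ℂ
    (fun w ↦ raiseWord C i t w.toList) (FreeMonoid.ofList w)
  rwa [basisFreeMonoid_apply] at this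

lemma raiseWord_mem_degreeLT (i : ι) (t : ℂ) (w : List ι) :
    raiseWord C i t w ∈ degreeLT w.length := by
  induction w with
  | nil => exact zero_mem _
  | cons j w ih =>
    refine add_mem (ι_mul_mem_degreeLT ih) ?_
    split_ifs
    · exact Submodule.smul_mem _ _ (word_mem_degreeLT (Nat.lt_succ_self _))
    · exact zero_mem _

lemma raise_mem_degreeLT (i : ι) (t : ℂ) {a : FreeAlgebra ℂ ι} {n : ℕ}
    (ha : a ∈ degreeLT (n + 1)) : raise C i t a ∈ degreeLT n := by
  suffices degreeLT (n + 1) ≤ (degreeLT n).comap (raise C i t) from this ha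
  exact degreeLT_le_iff.2 fun w hw ↦ by
    simpa using degreeLT_mono (Nat.lt_succ_iff.1 hw) (raiseWord_mem_degreeLT C i t w)

lemma raiseWord_affine (i : ι) (s t c : ℂ) (w : List ι) :
    (t - s) • raiseWord C i c w =
      (t - c) • raiseWord C i s w + (c - s) • raiseWord C i t w := by
  induction w with
  | nil => simp [raiseWord]
  | cons j w ih =>
    simp only [raiseWord, smul_add, ← mul_smul_comm, ih, mul_add]
    split_ifs
    · module
    · simp

lemma raise_affine (i : ι) (s t c : ℂ) (a : FreeAlgebra ℂ ι) :
    (t - s) • raise C i c a = (t - c) • raise C i s a + (c - s) • raise C i t a := by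
  have : (t - s) • raise C i c = (t - c) • raise C i s + (c - s) • raise C i t :=
    linearMap_ext_word fun w ↦ by simpa using raiseWord_affine C i s t c w
  exact LinearMap.congr_fun this a

lemma exists_homogeneous_decomposition {a : FreeAlgebra ℂ ι} {n : ℕ} (ha : a ∈ degreeLT n) :
    ∃ c : Multiset ι →₀ FreeAlgebra ℂ ι, (∀ s, c s ∈ homogeneous s) ∧
      (∀ s ∈ c.support, s.card < n) ∧ ∑ s ∈ c.support, c s = a := by
  obtain ⟨c, hc, rfl⟩ := (Submodule.mem_iSup_iff_exists_finsupp _ _).1 ha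
  have hcases (s : Multiset ι) : c s ∈ homogeneous s ∧ (s ∈ c.support → s.card < n) := by
    by_cases hs : s.card < n
    · exact ⟨by simpa [hs] using hc s, fun _ ↦ hs⟩
    · have : c s = 0 := by simpa [hs] using hc s
      simp [this]
  exact ⟨c, fun s ↦ (hcases s).1, fun s ↦ (hcases s).2, rfl⟩

end Words

section LoweringAction

variable {ι : Type} [Fintype ι] {H : LieSubalgebra ℂ L} (b : LieAlgebra.Basis ι H)
variable {M N : Type*} [AddCommGroup M] [Module ℂ M] [LieRingModule L M] [LieModule ℂ L M]
  [AddCommGroup N] [Module ℂ N] [LieRingModule L N] [LieModule ℂ L N]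

variable (M) in
/-- The action on a representation of noncommutative polynomials in the lowering operators. -/
noncomputable def lower : FreeAlgebra ℂ ι →ₐ[ℂ] Module.End ℂ M :=
  FreeAlgebra.lift ℂ fun i ↦ toEnd ℂ L M (b.f i)

@[simp] lemma lower_ι_mul (i : ι) (a : FreeAlgebra ℂ ι) (y : M) :
    lower b M (FreeAlgebra.ι ℂ i * a) y = ⁅b.f i, lower b M a y⁆ := by
  simp [lower]

lemma lower_map (φ : M →ₗ[ℂ] N) (hφ : ∀ i y, φ ⁅b.f i, y⁆ = ⁅b.f i, φ y⁆)
    (a : FreeAlgebra ℂ ι) (y : M) : φ (lower b M a y) = lower b N a (φ y) := by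
  have : φ ∘ₗ (lower b M).toLinearMap.flip y = (lower b N).toLinearMap.flip (φ y) := by
    refine linearMap_ext_word fun w ↦ ?_
    induction w with
    | nil => simp
    | cons i w ih =>
      simp only [LinearMap.comp_apply, LinearMap.flip_apply, AlgHom.toLinearMap_apply,
        word_cons, lower_ι_mul, hφ] at ih ⊢
      rw [ih]
  exact LinearMap.congr_fun this a

/-- `y` is a singular vector of weight `κ`: the Cartan subalgebra acts on it through `κ` and all
raising operators kill it. The zero vector is allowed. -/
structure IsSingular (κ : Module.Dual ℂ H) (y : M) : Prop where
  lie_h : ∀ x : H, ⁅(x : L), y⁆ = κ x • y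
  lie_e : ∀ i, ⁅b.e i, y⁆ = 0

/-- The sum of the simple roots indexed by `s`, with multiplicity. -/
noncomputable def rootSum (s : Multiset ι) : Module.Dual ℂ H :=
  (s.map b.baseSupp).sum

lemma rootSum_cons (i : ι) (s : Multiset ι) :
    rootSum b (i ::ₘ s) = b.baseSupp i + rootSum b s := by
  simp [rootSum]

lemma rootSum_apply_h' (s : Multiset ι) (i : ι) :
    rootSum b s (b.h' i) = (s.map fun l ↦ (b.A l i : ℂ)).sum := by
  induction s using Multiset.induction with
  | empty => simp [rootSum]
  | cons j s ih => simp [rootSum_cons, ih]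

variable {b} in
lemma eq_zero_of_mem_homogeneous_zero {a : FreeAlgebra ℂ ι} (ha : a ∈ homogeneous 0) {y : M}
    (hy : y ≠ 0) (h : lower b M a y = 0) : a = 0 := by
  obtain ⟨t, rfl⟩ := Submodule.mem_span_singleton.1 (homogeneous_zero (ι := ι) ▸ ha)
  have ht : t = 0 := by simpa [hy] using h
  rw [ht, zero_smul]

lemma lie_h_lower {s : Multiset ι} {a : FreeAlgebra ℂ ι} (ha : a ∈ homogeneous s) (x : H) (y : M) :
    ⁅(x : L), lower b M a y⁆ = lower b M a ⁅(x : L), y⁆ - rootSum b s x • lower b M a y := by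
  induction ha using Submodule.span_induction with
  | mem a ha =>
    obtain ⟨w, rfl, rfl⟩ := ha
    induction w with
    | nil => simp [rootSum]
    | cons i w ih =>
      have hf : ⁅(x : L), b.f i⁆ = -(b.baseSupp i x) • b.f i := by
        rw [neg_smul, b.baseSupp_apply_smul_f, neg_neg, LieSubalgebra.coe_bracket_of_module]
      rw [word_cons, lower_ι_mul, leibniz_lie, hf, ih, smul_lie, lie_sub, lie_smul, lower_ι_mul,
        ← Multiset.cons_coe, rootSum_cons, LinearMap.add_apply]
      module
  | zero => simp
  | add a a' _ _ ha ha' =>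
    simp only [map_add, LinearMap.add_apply, lie_add, ha, ha', smul_add]
    abel
  | smul c a _ ha =>
    simp only [map_smul, LinearMap.smul_apply, lie_smul, ha, smul_sub, smul_comm c]

lemma lie_h_lower_of_weight {κ : Module.Dual ℂ H} {y : M} (hy : ∀ x : H, ⁅(x : L), y⁆ = κ x • y)
    {s : Multiset ι} {a : FreeAlgebra ℂ ι} (ha : a ∈ homogeneous s) (x : H) :
    ⁅(x : L), lower b M a y⁆ = (κ - rootSum b s) x • lower b M a y := by
  rw [lie_h_lower b ha, hy, map_smul, LinearMap.sub_apply, sub_smul]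

lemma lie_e_lower_word (i : ι) (w : List ι) (y : M) :
    ⁅b.e i, lower b M (word w) y⁆ = lower b M (word w) ⁅b.e i, y⁆ +
      lower b M (raiseWord b.A i 0 w) y +
      lower b M (raiseWord b.A i 1 w - raiseWord b.A i 0 w) ⁅b.h i, y⁆ := by
  induction w with
  | nil => simp [raiseWord]
  | cons j w ih =>
    have hcomm : ⁅⁅b.e i, b.f j⁆, lower b M (word w) y⁆ = if i = j then
        lower b M (word w) ⁅b.h i, y⁆ - (w.map fun l ↦ (b.A l i : ℂ)).sum • lower b M (word w) y
        else 0 := by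
      split_ifs with hij
      · subst hij
        have hweight := lie_h_lower b (word_mem_homogeneous w) (b.h' i) y
        rw [rootSum_apply_h', Multiset.map_coe, Multiset.sum_coe] at hweight
        rw [(b.sl2 i).lie_e_f]
        exact hweight
      · rw [b.lie_e_f_ne i j hij, zero_lie]
    rw [word_cons, lower_ι_mul, leibniz_lie, ih, hcomm]
    simp only [raiseWord, map_add, map_sub, LinearMap.add_apply, LinearMap.sub_apply, lower_ι_mul,
      lie_add, lie_sub]
    split_ifs
    · simp only [map_smul, LinearMap.smul_apply]
      module
    · simp only [map_zero, LinearMap.zero_apply]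
      abel

lemma lie_e_lower (i : ι) (a : FreeAlgebra ℂ ι) (y : M) :
    ⁅b.e i, lower b M a y⁆ = lower b M a ⁅b.e i, y⁆ + lower b M (raise b.A i 0 a) y +
      lower b M (raise b.A i 1 a - raise b.A i 0 a) ⁅b.h i, y⁆ := by
  let T (y : M) := (lower b M).toLinearMap.flip y
  have : toEnd ℂ L M (b.e i) ∘ₗ T y = T ⁅b.e i, y⁆ + T y ∘ₗ raise b.A i 0 +
      T ⁅b.h i, y⁆ ∘ₗ (raise b.A i 1 - raise b.A i 0) :=
    linearMap_ext_word fun w ↦ by simpa [T] using lie_e_lower_word b i w y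
  exact LinearMap.congr_fun this a

variable {b}

lemma IsSingular.lie_e_lower {κ : Module.Dual ℂ H} {y : M} (hy : IsSingular b κ y)
    (i : ι) (a : FreeAlgebra ℂ ι) :
    ⁅b.e i, lower b M a y⁆ = lower b M (raise b.A i (κ (b.h' i)) a) y := by
  have haffine := raise_affine b.A i 0 1 (κ (b.h' i)) a
  rw [sub_zero, one_smul, sub_zero] at haffine
  have hh : ⁅b.h i, y⁆ = κ (b.h' i) • y := hy.lie_h (b.h' i)
  rw [AdjPaper.lie_e_lower, hy.lie_e, hh, haffine]
  simp only [map_zero, map_add, map_sub, map_smul, LinearMap.add_apply, LinearMap.sub_apply,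
    LinearMap.smul_apply]
  module

end LoweringAction

section PolynomialSequences

variable {M N : Type*} [AddCommGroup M] [Module ℂ M] [AddCommGroup N] [Module ℂ N]

variable (M) in
/-- The sequences in `M` whose `k`-th term depends polynomially on `k`. -/
noncomputable def polySeq : Submodule ℂ (ℕ → M) :=
  Submodule.span ℂ {g | ∃ (j : ℕ) (m : M), g = fun k : ℕ ↦ (k : ℂ) ^ j • m}

lemma const_mem_polySeq (m : M) : (fun _ ↦ m) ∈ polySeq M :=
  Submodule.subset_span ⟨0, m, by simp⟩

lemma map_mem_polySeq (T : M →ₗ[ℂ] N) {g : ℕ → M} (hg : g ∈ polySeq M) :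
    (fun k ↦ T (g k)) ∈ polySeq N := by
  suffices polySeq M ≤ (polySeq N).comap (T.compLeft ℕ) from this hg
  refine Submodule.span_le.2 ?_
  rintro _ ⟨j, m, rfl⟩
  exact Submodule.subset_span ⟨j, T m, by ext; simp⟩

lemma natCast_smul_mem_polySeq {g : ℕ → M} (hg : g ∈ polySeq M) :
    (fun k : ℕ ↦ (k : ℂ) • g k) ∈ polySeq M := by
  suffices polySeq M ≤ (polySeq M).comap
      (LinearMap.pi fun k : ℕ ↦ (k : ℂ) • LinearMap.proj k) from this hg
  refine Submodule.span_le.2 ?_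
  rintro _ ⟨j, m, rfl⟩
  exact Submodule.subset_span ⟨j + 1, m, by ext; simp [smul_smul, pow_succ']⟩

lemma exists_polynomial_of_mem_polySeq {g : ℕ → ℂ} (hg : g ∈ polySeq ℂ) :
    ∃ P : Polynomial ℂ, ∀ k : ℕ, g k = P.eval (k : ℂ) := by
  induction hg using Submodule.span_induction with
  | mem g hg =>
    obtain ⟨j, m, rfl⟩ := hg
    exact ⟨Polynomial.C m * Polynomial.X ^ j, fun k ↦ by simp [mul_comm m]⟩
  | zero => exact ⟨0, by simp⟩
  | add g g' _ _ hg hg' =>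
    obtain ⟨P, hP⟩ := hg
    obtain ⟨Q, hQ⟩ := hg'
    exact ⟨P + Q, by simp [hP, hQ]⟩
  | smul c g _ hg =>
    obtain ⟨P, hP⟩ := hg
    exact ⟨Polynomial.C c * P, by simp [hP]⟩

lemma eq_zero_of_mem_polySeq {g : ℕ → M} (hg : g ∈ polySeq M) {m : ℕ}
    (h : ∀ k, m ≤ k → g k = 0) (k : ℕ) : g k = 0 := by
  refine (Module.forall_dual_apply_eq_zero_iff ℂ _).1 fun φ ↦ ?_
  obtain ⟨P, hP⟩ := exists_polynomial_of_mem_polySeq (map_mem_polySeq φ hg)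
  have hroots : (Nat.cast '' Set.Ici m : Set ℂ) ⊆ {x | P.IsRoot x} := by
    rintro _ ⟨l, hl, rfl⟩
    simp [← hP, h l hl]
  have hP_zero : P = 0 := P.eq_zero_of_infinite_isRoot
    (((Set.Ici_infinite m).image Nat.cast_injective.injOn).mono hroots)
  rw [hP, hP_zero, Polynomial.eval_zero]

end PolynomialSequences

section TriangularAction

variable {ι : Type} [Fintype ι] {H : LieSubalgebra ℂ L} (b : LieAlgebra.Basis ι H)
variable {M N : Type*} [AddCommGroup M] [Module ℂ M] [LieRingModule L M] [LieModule ℂ L M]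
  [AddCommGroup N] [Module ℂ N] [LieRingModule L N] [LieModule ℂ L N]

lemma rootSum_eq_sum_count (s : Multiset ι) :
    rootSum b s = ∑ i, (s.count i : ℂ) • b.baseSupp i := by
  induction s using Multiset.induction with
  | empty => simp [rootSum]
  | cons j s ih =>
    simp [rootSum_cons, ih, Multiset.count_cons, add_smul, Finset.sum_add_distrib, add_comm,
      ite_smul]

lemma rootSum_injective : Function.Injective (rootSum b) := by
  intro s t hst
  rw [rootSum_eq_sum_count, rootSum_eq_sum_count] at hst
  ext i
  exact_mod_cast Fintype.linearIndependent_iffₛ.1 b.linearIndependent_baseSupp _ _ hst i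

/-- Components of different degree carry different weights, so they cannot cancel. -/
lemma lower_component_eq_zero {κ : Module.Dual ℂ H} {y : M}
    (hy : ∀ x : H, ⁅(x : L), y⁆ = κ x • y) {c : Multiset ι →₀ FreeAlgebra ℂ ι}
    (hc : ∀ s, c s ∈ homogeneous s) (h : lower b M (∑ s ∈ c.support, c s) y = 0)
    (s : Multiset ι) : lower b M (c s) y = 0 := by
  have := b.isLieAbelian_cartan
  let weight (s : Multiset ι) : H → ℂ := κ - rootSum b s
  have hweight : Function.Injective weight := fun s t hst ↦
    rootSum_injective b (sub_right_injective (DFunLike.coe_injective (F := Dual ℂ H) hst))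
  have hindep : iSupIndep fun s ↦ (genWeightSpace M (weight s) : Submodule ℂ M) :=
    (LieSubmodule.iSupIndep_toSubmodule.2 (iSupIndep_genWeightSpace ℂ H M)).comp hweight
  have hmem (s : Multiset ι) : lower b M (c s) y ∈ genWeightSpace M (weight s) :=
    weightSpace_le_genWeightSpace M _
      ((mem_weightSpace _ _).2 fun x ↦ lie_h_lower_of_weight b hy (hc s) x)
  by_cases hs : s ∈ c.support
  · exact (iSupIndep_iff_finsetSum_eq_zero_imp_eq_zero _).1 hindep c.support
      (fun s ↦ lower b M (c s) y) (fun s _ ↦ hmem s) (by simpa using h) s hs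
  · rw [Finsupp.notMem_support_iff.1 hs, map_zero, LinearMap.zero_apply]

lemma lower_eq_zero_of_homogeneous {κ : Module.Dual ℂ H} {y : M}
    (hy : ∀ x : H, ⁅(x : L), y⁆ = κ x • y) {z : N} {n : ℕ}
    (h : ∀ s : Multiset ι, s.card < n → ∀ c ∈ homogeneous s,
      lower b M c y = 0 → lower b N c z = 0)
    {a : FreeAlgebra ℂ ι} (ha : a ∈ degreeLT n) (hay : lower b M a y = 0) :
    lower b N a z = 0 := by
  obtain ⟨c, hc, hcard, rfl⟩ := exists_homogeneous_decomposition ha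
  rw [map_sum, LinearMap.sum_apply]
  exact Finset.sum_eq_zero fun s hs ↦
    h s (hcard s hs) _ (hc s) (lower_component_eq_zero b hy hc hay s)

lemma exists_lower_eq_toEnd {x : L} (hx : x ∈ LieSubalgebra.lieSpan ℂ L (Set.range b.f)) :
    ∃ a : FreeAlgebra ℂ ι, ∀ (M : Type) [AddCommGroup M] [Module ℂ M] [LieRingModule L M]
      [LieModule ℂ L M], lower b M a = toEnd ℂ L M x := by
  induction hx using LieSubalgebra.lieSpan_induction with
  | mem x hx =>
    obtain ⟨i, rfl⟩ := hx
    exact ⟨FreeAlgebra.ι ℂ i, by simp [lower]⟩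
  | zero => exact ⟨0, by simp⟩
  | add x y _ _ hx hy =>
    obtain ⟨a, ha⟩ := hx
    obtain ⟨a', ha'⟩ := hy
    exact ⟨a + a', by simp [ha, ha']⟩
  | smul c x _ hx =>
    obtain ⟨a, ha⟩ := hx
    exact ⟨c • a, by simp [ha]⟩
  | lie x y _ _ hx hy =>
    obtain ⟨a, ha⟩ := hx
    obtain ⟨a', ha'⟩ := hy
    exact ⟨a * a' - a' * a, by simp [ha, ha', Ring.lie_def]⟩

/-- `G k` describes how `x` acts on `lower b M a y` when `y` is a singular vector of weight
`k • μ`, as `raise` does for `x = b.e i`. -/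
structure IsRaisingFamily (μ : Module.Dual ℂ H) (x : L)
    (G : ℕ → FreeAlgebra ℂ ι →ₗ[ℂ] FreeAlgebra ℂ ι) : Prop where
  lie_lower : ∀ (k : ℕ) (M : Type) [AddCommGroup M] [Module ℂ M] [LieRingModule L M]
    [LieModule ℂ L M] (y : M), IsSingular b (k • μ) y →
      ∀ a, ⁅x, lower b M a y⁆ = lower b M (G k a) y
  mem_degreeLT : ∀ k n a, a ∈ degreeLT (n + 1) → G k a ∈ degreeLT n
  mem_polySeq : ∀ p ∈ polySeq (FreeAlgebra ℂ ι), (fun k ↦ G k (p k)) ∈ polySeq (FreeAlgebra ℂ ι)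

lemma isRaisingFamily_e (μ : Module.Dual ℂ H) (i : ι) :
    IsRaisingFamily b μ (b.e i) fun k ↦ raise b.A i (k * μ (b.h' i)) where
  lie_lower k M _ _ _ _ y hy a := by simpa using hy.lie_e_lower i a
  mem_degreeLT k n a := raise_mem_degreeLT b.A i _
  mem_polySeq p hp := by
    let t := μ (b.h' i)
    have haffine (k : ℕ) : raise b.A i (k * t) (p k) =
        raise b.A i 0 (p k) + (k : ℂ) • (t • (raise b.A i 1 - raise b.A i 0)) (p k) := by
      have := raise_affine b.A i 0 1 (k * t) (p k)
      simp only [sub_zero, one_smul] at this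
      rw [this, LinearMap.smul_apply, LinearMap.sub_apply]
      module
    rw [funext haffine]
    exact add_mem (map_mem_polySeq _ hp) (natCast_smul_mem_polySeq (map_mem_polySeq _ hp))

lemma exists_isRaisingFamily (μ : Module.Dual ℂ H) {x : L}
    (hx : x ∈ LieSubalgebra.lieSpan ℂ L (Set.range b.e)) : ∃ G, IsRaisingFamily b μ x G := by
  induction hx using LieSubalgebra.lieSpan_induction with
  | mem x hx =>
    obtain ⟨i, rfl⟩ := hx
    exact ⟨_, isRaisingFamily_e b μ i⟩
  | zero => exact ⟨0, by simp, by simp, fun _ _ ↦ zero_mem _⟩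
  | add x y _ _ hx hy =>
    obtain ⟨G, hG⟩ := hx
    obtain ⟨G', hG'⟩ := hy
    refine ⟨G + G', fun k M _ _ _ _ v hv a ↦ ?_, fun k n a ha ↦ ?_, fun p hp ↦ ?_⟩
    · simp [hG.lie_lower k M v hv, hG'.lie_lower k M v hv]
    · exact add_mem (hG.mem_degreeLT k n a ha) (hG'.mem_degreeLT k n a ha)
    · exact add_mem (hG.mem_polySeq p hp) (hG'.mem_polySeq p hp)
  | smul c x _ hx =>
    obtain ⟨G, hG⟩ := hx
    refine ⟨c • G, fun k M _ _ _ _ v hv a ↦ ?_, fun k n a ha ↦ ?_, fun p hp ↦ ?_⟩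
    · simp [hG.lie_lower k M v hv]
    · exact Submodule.smul_mem _ c (hG.mem_degreeLT k n a ha)
    · exact Submodule.smul_mem _ c (hG.mem_polySeq p hp)
  | lie x y _ _ hx hy =>
    obtain ⟨G, hG⟩ := hx
    obtain ⟨G', hG'⟩ := hy
    refine ⟨fun k ↦ G k ∘ₗ G' k - G' k ∘ₗ G k, fun k M _ _ _ _ v hv a ↦ ?_, fun k n a ha ↦ ?_,
      fun p hp ↦ ?_⟩
    · simp [lie_lie, hG.lie_lower k M v hv, hG'.lie_lower k M v hv]
    · have hmono := degreeLT_mono (ι := ι) n.le_succ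
      exact sub_mem (hG.mem_degreeLT k n _ (hmono (hG'.mem_degreeLT k n a ha)))
        (hG'.mem_degreeLT k n _ (hmono (hG.mem_degreeLT k n a ha)))
    · exact sub_mem (hG.mem_polySeq _ (hG'.mem_polySeq p hp))
        (hG'.mem_polySeq _ (hG.mem_polySeq p hp))

end TriangularAction

section SimpleRootVectors

variable [FiniteDimensional ℂ L]

lemma mem_root_iff {H : LieSubalgebra ℂ L} [H.IsCartanSubalgebra]
    {χ : Weight ℂ H L} : χ ∈ H.root ↔ χ.IsNonZero := by
  simp [LieSubalgebra.root]

lemma lie_ne_zero_of_lie_h_eq_neg {h e f : L} (t : IsSl2Triple h e f) {x : L} (hx : x ≠ 0) {n : ℤ}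
    (hn : n < 0) (hhx : ⁅h, x⁆ = (n : ℂ) • x) : ⁅e, x⁆ ≠ 0 := by
  intro he
  obtain ⟨m, hm⟩ := (IsSl2Triple.HasPrimitiveVectorWith.mk (t := t) hx hhx he).exists_nat
  have : n = m := by exact_mod_cast hm
  omega

variable [IsKilling ℂ L] {H : LieSubalgebra ℂ L} [H.IsCartanSubalgebra]

lemma exists_killingForm_ne_zero {χ : H → ℂ} {x : L} (hx : x ∈ rootSpace H χ) (hx0 : x ≠ 0) :
    ∃ y ∈ rootSpace H (-χ), killingForm ℂ L x y ≠ 0 := by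
  by_contra! h
  have := mem_ker_killingForm_of_mem_rootSpace_of_forall_rootSpace_neg ℂ L H hx h
  rw [IsKilling.ker_killingForm_eq_bot] at this
  exact hx0 (by simpa using this)

lemma exists_eq_smul_of_mem_rootSpace {χ : Weight ℂ H L} (hχ : χ.IsNonZero) {x y : L}
    (hx : x ∈ rootSpace H χ) (hx0 : x ≠ 0) (hy : y ∈ rootSpace H χ) : ∃ c : ℂ, y = c • x := by
  obtain ⟨c, hc⟩ := exists_smul_eq_of_finrank_eq_one (IsKilling.finrank_rootSpace_eq_one χ hχ)
    (x := ⟨x, hx⟩) (fun h ↦ hx0 (congrArg Subtype.val h)) ⟨y, hy⟩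
  exact ⟨c, congrArg Subtype.val hc.symm⟩

lemma lie_coroot_eq_smul (χ : Weight ℂ H L) {ψ : H → ℂ} {x : L} (hx : x ∈ rootSpace H ψ) :
    ⁅(IsKilling.coroot χ : L), x⁆ = ψ (IsKilling.coroot χ) • x :=
  IsKilling.lie_eq_smul_of_mem_rootSpace hx _

/-- If `ψ (χ∨) < 0` this is `sl₂`-theory for `x`; otherwise `sl₂`-theory applies in the dual
root space of `-(ψ + χ)`, and the invariance of the Killing form transports the conclusion. -/
lemma lie_ne_zero_of_root_add {χ ψ φ : Weight ℂ H L} (hχ : χ.IsNonZero) (hψ : ψ.IsNonZero)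
    (hφ : (φ : H → ℂ) = ψ + χ) {e f x : L} (he : e ∈ rootSpace H χ)
    (t : IsSl2Triple (IsKilling.coroot χ : L) e f) (hx : x ∈ rootSpace H ψ) (hx0 : x ≠ 0) :
    ⁅e, x⁆ ≠ 0 := by
  have hp := IsKilling.apply_coroot_eq_cast χ ψ
  set p : ℤ := chainBotCoeff χ ψ - chainTopCoeff χ ψ
  obtain hlt | hge := lt_or_ge p 0
  · exact lie_ne_zero_of_lie_h_eq_neg t hx0 hlt (by rw [lie_coroot_eq_smul _ hx, hp])
  obtain ⟨z, hz, hz0⟩ := (-φ).exists_ne_zero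
  rw [Weight.coe_neg, hφ] at hz
  have hez0 : ⁅e, z⁆ ≠ 0 := by
    refine lie_ne_zero_of_lie_h_eq_neg t hz0 (n := -(p + 2)) (by omega) ?_
    rw [lie_coroot_eq_smul _ hz]
    simp [hp, IsKilling.root_apply_coroot hχ]
  have hez : ⁅e, z⁆ ∈ rootSpace H (-ψ : H → ℂ) := by
    simpa using lie_mem_genWeightSpace_of_mem_genWeightSpace he hz
  obtain ⟨y, hy, hzy⟩ := exists_killingForm_ne_zero hez hez0
  obtain ⟨c, rfl⟩ := exists_eq_smul_of_mem_rootSpace hψ hx hx0 (by simpa using hy)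
  intro hex
  rw [← lie_skew, map_neg, LinearMap.neg_apply, LieModule.traceForm_apply_lie_apply] at hzy
  simp [hex] at hzy

lemma rootSpace_le_of_root_add {χ ψ φ : Weight ℂ H L} (hχ : χ.IsNonZero) (hψ : ψ.IsNonZero)
    (hφ₀ : φ.IsNonZero) (hφ : (φ : H → ℂ) = ψ + χ) {e f : L} (he : e ∈ rootSpace H χ)
    (t : IsSl2Triple (IsKilling.coroot χ : L) e f) {S : LieSubalgebra ℂ L} (heS : e ∈ S)
    (hψS : (rootSpace H ψ).toSubmodule ≤ S.toSubmodule) :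
    (rootSpace H φ).toSubmodule ≤ S.toSubmodule := by
  intro x hx
  obtain ⟨y, hy, hy0⟩ := ψ.exists_ne_zero
  have hey : ⁅e, y⁆ ∈ rootSpace H φ := by
    simpa [hφ, add_comm] using lie_mem_genWeightSpace_of_mem_genWeightSpace he hy
  obtain ⟨c, rfl⟩ := exists_eq_smul_of_mem_rootSpace hφ₀ hey
    (lie_ne_zero_of_root_add hχ hψ hφ he t hy hy0) hx
  exact S.smul_mem c (S.lie_mem heS (hψS hy))

lemma coe_reflectionPerm_self (i : H.root) :
    (((IsKilling.rootSystem H).reflectionPerm i i : H.root) : Weight ℂ H L) = -i.1 := by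
  have h : (IsKilling.rootSystem H).root ((IsKilling.rootSystem H).reflectionPerm i i) =
      -(IsKilling.rootSystem H).root i := by
    rw [RootPairing.root_reflectionPerm, RootPairing.reflection_apply_self]
  exact DFunLike.ext _ _ (LinearMap.congr_fun h :)

lemma intCast_pairingIn (i j : H.root) :
    ((IsKilling.rootSystem H).pairingIn ℤ i j : ℂ) = i.1 (IsKilling.coroot j.1) := by
  simpa using (IsKilling.rootSystem H).algebraMap_pairingIn ℤ i j

end SimpleRootVectors

section BasisOfBase

variable {ι : Type} {H : LieSubalgebra ℂ L} [H.IsCartanSubalgebra]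
  [FiniteDimensional ℂ L] [IsKilling ℂ L] {β : (IsKilling.rootSystem H).Base} {a : ι ≃ β.support}
  {e f : ι → L}

/-- `e i`, `f i` are root vectors for the `i`-th simple root of `β` and its negative, normalised
so that `⁅e i, f i⁆` is the coroot; `a` enumerates the simple roots. -/
structure IsChevalleySystem (a : ι ≃ β.support) (e f : ι → L) : Prop where
  e_mem : ∀ i, e i ∈ rootSpace H (a i : H.root)
  f_mem : ∀ i, f i ∈ rootSpace H (-(a i : H.root) : H → ℂ)
  lie_e_f : ∀ i, ⁅e i, f i⁆ = (IsKilling.coroot (a i).1.1 : L)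

lemma span_coroot_base (a : ι ≃ β.support) :
    Submodule.span ℂ (Set.range fun i ↦ IsKilling.coroot (a i).1.1) = ⊤ := by
  rw [← RootPairing.IsRootSystem.span_coroot_eq_top (P := IsKilling.rootSystem H)]
  refine Eq.trans ?_ β.span_coroot_support
  congr 1
  ext x
  refine ⟨?_, ?_⟩
  · rintro ⟨i, rfl⟩
    exact ⟨a i, (a i).2, rfl⟩
  · rintro ⟨k, hk, rfl⟩
    obtain ⟨i, hi⟩ := a.surjective ⟨k, hk⟩
    exact ⟨i, by simp [hi]⟩

lemma lieSpan_range_coroot (a : ι ≃ β.support) :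
    LieSubalgebra.lieSpan ℂ L (Set.range fun i ↦ (IsKilling.coroot (a i).1.1 : L)) = H := by
  have hrange : Set.range (fun i ↦ (IsKilling.coroot (a i).1.1 : L)) =
      H.toSubmodule.subtype '' Set.range fun i ↦ IsKilling.coroot (a i).1.1 := by
    rw [← Set.range_comp]
    rfl
  rw [← LieSubalgebra.toSubmodule_inj, LieSubalgebra.coe_lieSpan_eq_span_of_forall_lie_eq_zero,
    hrange, ← Submodule.map_span, span_coroot_base, Submodule.map_subtype_top]
  rintro _ ⟨i, rfl⟩ _ ⟨j, rfl⟩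
  rw [← LieSubalgebra.coe_bracket, trivial_lie_zero, ZeroMemClass.coe_zero]

lemma linearIndependent_coroot (a : ι ≃ β.support) :
    LinearIndependent ℂ fun i ↦ (IsKilling.coroot (a i).1.1 : L) := by
  have h := (linearIndependent_equiv a).2 β.linearIndepOn_coroot
  exact h.map' H.toSubmodule.subtype (Submodule.ker_subtype _)

namespace IsChevalleySystem

lemma sl2 (hef : IsChevalleySystem a e f) (i : ι) :
    IsSl2Triple (IsKilling.coroot (a i).1.1 : L) (e i) (f i) := by
  have hχ : (a i).1.1.IsNonZero := H.isNonZero_coe_root (a i)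
  have h2 := IsKilling.root_apply_coroot hχ
  refine ⟨fun h ↦ ?_, hef.lie_e_f i, ?_, ?_⟩
  · rw [ZeroMemClass.coe_eq_zero] at h
    simp [h] at h2
  · rw [lie_coroot_eq_smul _ (hef.e_mem i)]
    simp [h2, ofNat_smul_eq_nsmul]
  · rw [lie_coroot_eq_smul _ (hef.f_mem i)]
    simp [h2, ofNat_smul_eq_nsmul]

lemma lie_e_f_of_ne (hef : IsChevalleySystem a e f) {i j : ι} (hij : i ≠ j) : ⁅e i, f j⁆ = 0 := by
  by_contra h
  have hmem := lie_mem_genWeightSpace_of_mem_genWeightSpace (hef.e_mem i) (hef.f_mem j)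
  let χ : Weight ℂ H L :=
    ⟨_, fun hbot ↦ h (by rwa [← LieSubmodule.mem_bot (R := ℂ) (L := H), ← hbot])⟩
  have hχ : χ.toLinear =
      (IsKilling.rootSystem H).root (a i) - (IsKilling.rootSystem H).root (a j) := by
    ext x
    simp [χ, sub_eq_add_neg]
  have hχ0 : χ.IsNonZero := fun h0 ↦ by
    refine hij (a.injective (Subtype.ext ((IsKilling.rootSystem H).root.injective ?_)))
    rw [← sub_eq_zero, ← hχ]
    ext x
    simp [h0.eq]
  exact β.sub_notMem_range_root (a i).2 (a j).2 ⟨⟨χ, mem_root_iff.2 hχ0⟩, by simpa using hχ⟩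

lemma rootSpace_le (hef : IsChevalleySystem a e f) {S : LieSubalgebra ℂ L} (he : ∀ i, e i ∈ S)
    {k : H.root} (hk : β.IsPos k) : (rootSpace H k.1).toSubmodule ≤ S.toSubmodule := by
  refine hk.induction_on_add (p := fun k ↦ (rootSpace H k.1).toSubmodule ≤ S.toSubmodule)
    (fun k hk x hx ↦ ?_) fun i j k hijk ih hj ↦ ?_
  · obtain ⟨m, hm⟩ := a.surjective ⟨k, hk⟩
    obtain rfl : (a m).1 = k := by rw [hm]
    obtain ⟨c, rfl⟩ := exists_eq_smul_of_mem_rootSpace (H.isNonZero_coe_root _) (hef.e_mem m)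
      (hef.sl2 m).e_ne_zero hx
    exact S.smul_mem c (he m)
  · obtain ⟨m, hm⟩ := a.surjective ⟨j, hj⟩
    obtain rfl : (a m).1 = j := by rw [hm]
    exact rootSpace_le_of_root_add (H.isNonZero_coe_root _) (H.isNonZero_coe_root _)
      (H.isNonZero_coe_root _) (congrArg DFunLike.coe hijk) (hef.e_mem m) (hef.sl2 m) (he m) ih

lemma rootSpace_neg_le (hef : IsChevalleySystem a e f) {S : LieSubalgebra ℂ L}
    (hf : ∀ i, f i ∈ S) {k : H.root} (hk : β.IsPos k) :
    (rootSpace H (-k.1)).toSubmodule ≤ S.toSubmodule := by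
  have isNonZero_neg (k : H.root) : (-k.1).IsNonZero := by
    simpa using H.isNonZero_coe_root k
  refine hk.induction_on_add (p := fun k ↦ (rootSpace H (-k.1)).toSubmodule ≤ S.toSubmodule)
    (fun k hk x hx ↦ ?_) fun i j k hijk ih hj ↦ ?_
  · obtain ⟨m, hm⟩ := a.surjective ⟨k, hk⟩
    obtain rfl : (a m).1 = k := by rw [hm]
    obtain ⟨c, rfl⟩ := exists_eq_smul_of_mem_rootSpace (isNonZero_neg _) (hef.f_mem m)
      (hef.sl2 m).f_ne_zero hx
    exact S.smul_mem c (hf m)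
  · obtain ⟨m, hm⟩ := a.surjective ⟨j, hj⟩
    obtain rfl : (a m).1 = j := by rw [hm]
    have hadd : (k.1 : H → ℂ) = i.1 + (a m).1.1 := congrArg DFunLike.coe hijk
    refine rootSpace_le_of_root_add (isNonZero_neg _) (isNonZero_neg _) (isNonZero_neg _)
      (by simp [hadd, add_comm]) (f := e m) (hef.f_mem m) ?_ (hf m) ih
    simpa [IsKilling.coroot_neg] using (hef.sl2 m).symm

lemma lieSpan_eq_top (hef : IsChevalleySystem a e f) :
    LieSubalgebra.lieSpan ℂ L (Set.range e ∪ Set.range f) = ⊤ := by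
  set S := LieSubalgebra.lieSpan ℂ L (Set.range e ∪ Set.range f)
  have he (i) : e i ∈ S := LieSubalgebra.subset_lieSpan (.inl ⟨i, rfl⟩)
  have hf (i) : f i ∈ S := LieSubalgebra.subset_lieSpan (.inr ⟨i, rfl⟩)
  have hroot (k : H.root) : (rootSpace H k.1).toSubmodule ≤ S.toSubmodule := by
    let := (IsKilling.rootSystem H).indexNeg
    obtain hpos | hneg := RootPairing.Base.IsPos.or_neg (b := β) k
    · exact hef.rootSpace_le he hpos
    · simpa [coe_reflectionPerm_self] using hef.rootSpace_neg_le hf hneg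
  have hH : H.toSubmodule ≤ S.toSubmodule := by
    change H ≤ S
    rw [← lieSpan_range_coroot a, LieSubalgebra.lieSpan_le, Set.range_subset_iff]
    exact fun i ↦ hef.lie_e_f i ▸ S.lie_mem (he i) (hf i)
  rw [← LieSubalgebra.toSubmodule_inj, LieSubalgebra.top_toSubmodule, eq_top_iff,
    ← LieSubmodule.top_toSubmodule (R := ℂ) (L := H), ← iSup_genWeightSpace_eq_top' ℂ H L,
    LieSubmodule.iSup_toSubmodule, iSup_le_iff]
  intro χ
  by_cases hχ : χ.IsZero
  · have h0 : rootSpace H χ = H.toLieSubmodule := hχ.eq ▸ rootSpace_zero_eq ℂ L H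
    exact fun x hx ↦ hH (h0.le hx)
  · exact hroot ⟨χ, mem_root_iff.2 hχ⟩

variable [Fintype ι]

/-- The `LieAlgebra.Basis` consisting of a Chevalley system and its simple coroots. -/
noncomputable def basis (hef : IsChevalleySystem a e f) : LieAlgebra.Basis ι H where
  A := .of fun i j ↦ (IsKilling.rootSystem H).pairingIn ℤ (a i) (a j)
  h i := IsKilling.coroot (a i).1.1
  e := e
  f := f
  cartan_eq_lieSpan := (lieSpan_range_coroot a).symm
  span_ef := hef.lieSpan_eq_top
  linInd := linearIndependent_coroot a
  nondegen := by
    exact Matrix.nondegenerate_of_det_ne_zero <|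
      (Matrix.det_submatrix_equiv_self a β.cartanMatrix).trans_ne
        β.cartanMatrix_nondegenerate.det_ne_zero
  sl2 := hef.sl2
  lie_h_h i j := by
    rw [← LieSubalgebra.coe_bracket, trivial_lie_zero, ZeroMemClass.coe_zero]
  lie_h_e i j := by
    rw [lie_coroot_eq_smul _ (hef.e_mem i), ← Int.cast_smul_eq_zsmul ℂ, Matrix.of_apply,
      intCast_pairingIn, Weight.toLinear_apply]
  lie_h_f i j := by
    rw [lie_coroot_eq_smul _ (hef.f_mem i), ← Int.cast_smul_eq_zsmul ℂ, Int.cast_neg,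
      Matrix.of_apply, intCast_pairingIn, Pi.neg_apply, Weight.toLinear_apply]
  lie_e_f_ne _ _ := hef.lie_e_f_of_ne

end IsChevalleySystem
end BasisOfBase

section BasisOfIsBase

variable {H : LieSubalgebra ℂ L} [H.IsCartanSubalgebra] [FiniteDimensional ℂ L] [IsKilling ℂ L]

lemma IsRoot.exists_root_eq {χ : Dual ℂ H} (hχ : IsRoot H χ) :
    ∃ k : H.root, (IsKilling.rootSystem H).root k = χ :=
  ⟨⟨⟨χ, hχ.2⟩, mem_root_iff.2 fun h ↦ hχ.1 (DFunLike.coe_injective h)⟩, rfl⟩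

lemma isRoot_root (k : H.root) : IsRoot H ((IsKilling.rootSystem H).root k) :=
  ⟨(IsKilling.rootSystem H).ne_zero k, k.1.genWeightSpace_ne_bot⟩

lemma IsBase.exists_base {r : ℕ} {α : Fin r → Dual ℂ H} (hα : IsBase H α) :
    ∃ (β : (IsKilling.rootSystem H).Base) (a : Fin r ≃ β.support),
      ∀ j, (IsKilling.rootSystem H).root (a j) = α j := by
  choose k hk using fun j ↦ (hα.isRoot j).exists_root_eq
  have hinj : Function.Injective k := fun i j hij ↦
    hα.indep.injective <| by rw [← hk i, ← hk j, hij]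
  have hindep : LinearIndepOn ℂ (IsKilling.rootSystem H).root (Set.range k) := by
    rw [LinearIndepOn, ← linearIndependent_equiv (Equiv.ofInjective k hinj)]
    exact (funext hk : (IsKilling.rootSystem H).root ∘ k = α) ▸ hα.indep
  have hmem (c : Fin r → ℕ) : ∑ j, (c j : ℂ) • α j ∈
      AddSubmonoid.closure ((IsKilling.rootSystem H).root '' Set.range k) := by
    refine sum_mem fun j _ ↦ ?_
    rw [Nat.cast_smul_eq_nsmul]
    exact nsmul_mem (AddSubmonoid.subset_closure (hk j ▸ Set.mem_image_of_mem _ ⟨j, rfl⟩)) _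
  let β := RootPairing.Base.mk' (IsKilling.rootSystem H) (Set.range k) hindep fun χ ↦ by
    obtain ⟨c, hc⟩ | ⟨c, hc⟩ := hα.pos_neg _ (isRoot_root χ)
    · exact .inl (hc ▸ hmem c)
    · exact .inr (by simpa only [hc, neg_neg] using hmem c)
  let a : Fin r ≃ β.support :=
    (Equiv.ofInjective k hinj).trans (Set.Finite.subtypeEquivToFinset _)
  exact ⟨β, a, hk⟩

lemma IsCoroot.eq_coroot {w : Weight ℂ H L} {t : H} (ht : IsCoroot H w.toLinear t) :
    t = IsKilling.coroot w := by
  obtain ⟨e, he, f, hf, hef⟩ := ht.2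
  refine IsKilling.eq_coroot_of_mem_corootSpace_of_two w ?_ ht.1
  exact (mem_corootSpace _).mpr <| Submodule.subset_span ⟨e, he, f, hf, hef.symm⟩

theorem IsBase.exists_basis {r : ℕ} {α : Fin r → Dual ℂ H} {t : Fin r → H} (hα : IsBase H α)
    (ht : ∀ j, IsCoroot H (α j) (t j)) :
    ∃ b : LieAlgebra.Basis (Fin r) H, b.baseSupp = α ∧ b.h' = t := by
  obtain ⟨β, a, ha⟩ := hα.exists_base
  have htj (j) : t j = IsKilling.coroot (a j).1.1 :=
    IsCoroot.eq_coroot (w := (a j).1.1) (by simpa [← ha] using ht j)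
  choose e he f hf hef using fun j ↦ (ht j).2
  have hsys : IsChevalleySystem a e f := {
    e_mem j := by simpa [← ha] using he j
    f_mem j := by simpa [← ha] using hf j
    lie_e_f j := by rw [← hef, htj] }
  refine ⟨hsys.basis, funext fun i ↦ ?_, funext fun j ↦ (htj j).symm⟩
  refine LinearMap.ext_on_range (span_coroot_base a) fun j ↦ ?_
  rw [← ha i]
  exact (hsys.basis.baseSupp_apply_h' i j).trans (intCast_pairingIn _ _)

end BasisOfIsBase

section PositiveRoots

variable {ι : Type} [Fintype ι] {H : LieSubalgebra ℂ L} [FiniteDimensional ℂ L] [IsKilling ℂ L]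
  (b : LieAlgebra.Basis ι H)

lemma isChevalleySystem_basis :
    letI := b.isCartanSubalgebra
    IsChevalleySystem b.baseSupportEquiv b.e b.f :=
  letI := b.isCartanSubalgebra
  { e_mem i := weightSpace_le_genWeightSpace L _ <| (mem_weightSpace _ _).2 fun x ↦
      (b.baseSupp_apply_smul_e i x).symm
    f_mem i := weightSpace_le_genWeightSpace L _ <| (mem_weightSpace _ _).2 fun x ↦ by
      have h := b.baseSupp_apply_smul_f i x
      rw [← neg_eq_iff_eq_neg, ← neg_smul] at h
      exact h.symm
    lie_e_f i := by
      rw [b.coroot_eq_h', (b.sl2 i).lie_e_f]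
      rfl }

variable [H.IsCartanSubalgebra]

lemma rootSpace_le_lieSpan_e {k : H.root} (hk : b.base.IsPos k) :
    (rootSpace H k.1).toSubmodule ≤ (LieSubalgebra.lieSpan ℂ L (Set.range b.e)).toSubmodule :=
  (isChevalleySystem_basis b).rootSpace_le
    (fun i ↦ LieSubalgebra.subset_lieSpan (Set.mem_range_self i)) hk

lemma rootSpace_neg_le_lieSpan_f {k : H.root} (hk : b.base.IsPos k) :
    (rootSpace H (-k.1)).toSubmodule ≤ (LieSubalgebra.lieSpan ℂ L (Set.range b.f)).toSubmodule :=
  (isChevalleySystem_basis b).rootSpace_neg_le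
    (fun i ↦ LieSubalgebra.subset_lieSpan (Set.mem_range_self i)) hk

/-- The simple root `b.baseSupp j` as an element of `LieSubalgebra.root`. -/
noncomputable def simpleRoot (j : ι) : H.root := b.baseSupportEquiv j

lemma coe_simpleRoot (j : ι) : (simpleRoot b j).1.toLinear = b.baseSupp j := rfl

lemma coroot_simpleRoot (j : ι) : IsKilling.coroot (simpleRoot b j).1 = b.h' j := b.coroot_eq_h' j

lemma simpleRoot_apply_h' (j : ι) : (simpleRoot b j).1 (b.h' j) = 2 := by
  rw [← coroot_simpleRoot, IsKilling.root_apply_coroot (H.isNonZero_coe_root _)]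

lemma reflectionPerm_simpleRoot_apply_h' (j : ι) (k : H.root) :
    ((IsKilling.rootSystem H).reflectionPerm (simpleRoot b j) k).1 (b.h' j) = -k.1 (b.h' j) := by
  have h := (IsKilling.rootSystem H).root_reflectionPerm (simpleRoot b j) k
  rw [RootPairing.reflection_apply_root, IsKilling.rootSystem_pairing_apply,
    coroot_simpleRoot] at h
  refine (LinearMap.congr_fun h (b.h' j)).trans ?_
  change k.1 (b.h' j) - k.1 (b.h' j) * (simpleRoot b j).1 (b.h' j) = _
  rw [simpleRoot_apply_h']
  ring

/-- Twice the half-sum `ρ` of positive roots. -/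
noncomputable def twoRho : Dual ℂ H :=
  ∑ k : H.root with b.base.IsPos k, k.1.toLinear

lemma twoRho_apply_h' (j : ι) : twoRho b (b.h' j) = 2 := by
  set P := IsKilling.rootSystem H
  set k := simpleRoot b j
  have hkpos : b.base.IsPos k := b.base.isPos_of_mem_support (b.baseSupportEquiv j).2
  have hzero : ∑ i ∈ (Finset.univ.filter fun i ↦ b.base.IsPos i).erase k, i.1 (b.h' j) = 0 := by
    refine Finset.sum_involution (fun i _ ↦ P.reflectionPerm k i) (fun i _ ↦ ?_)
      (fun i _ hne h ↦ hne ?_) (fun i hi ↦ ?_) fun i _ ↦ P.reflectionPerm_self k i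
    · rw [reflectionPerm_simpleRoot_apply_h', add_neg_cancel]
    · rw [← self_eq_neg, ← reflectionPerm_simpleRoot_apply_h', h]
    · rw [Finset.mem_erase, Finset.mem_filter] at hi ⊢
      have hpos := RootPairing.Base.IsPos.reflectionPerm hi.2.2 (b.baseSupportEquiv j).2 hi.1
      refine ⟨fun h ↦ (RootPairing.Base.IsPos.neg_iff_not b.base k).1 ?_ hkpos,
        Finset.mem_univ _, hpos⟩
      have hik : P.reflectionPerm k k = i := by rw [← P.reflectionPerm_self k i, h]
      exact (congrArg b.base.IsPos hik).mpr hi.2.2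
  rw [twoRho, LinearMap.sum_apply, ← Finset.add_sum_erase _ _ (Finset.mem_filter.2
    ⟨Finset.mem_univ k, hkpos⟩)]
  exact (congrArg₂ (· + ·) (simpleRoot_apply_h' b j) hzero).trans (add_zero _)

end PositiveRoots

section KillingPositivity

open scoped ComplexOrder

variable {H : LieSubalgebra ℂ L} [H.IsCartanSubalgebra] [FiniteDimensional ℂ L] [IsKilling ℂ L]

lemma traceForm_self_pos {x : H} (hx : ∀ χ : Weight ℂ H L, (χ x).im = 0) (hx0 : x ≠ 0) :
    0 < traceForm ℂ H L x x := by
  have hsum : traceForm ℂ H L x x = ∑ χ ∈ H.root, χ x * χ x := by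
    have h := LinearMap.congr_fun₂
      (IsKilling.restrict_killingForm_eq_sum (K := ℂ) (L := L) (H := H)) x x
    simpa only [LinearMap.sum_apply] using! h
  have hsq (χ : Weight ℂ H L) : 0 ≤ χ x * χ x := by
    simp [Complex.le_def, hx, mul_self_nonneg]
  obtain ⟨χ, hχ⟩ : ∃ χ : Weight ℂ H L, χ x ≠ 0 := by
    by_contra! h
    have hmem : x ∈ ⨅ χ : Weight ℂ H L, χ.ker := (Submodule.mem_iInf _).2 h
    rw [IsKilling.iInf_ker_weight_eq_bot, Submodule.mem_bot] at hmem
    exact hx0 hmem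
  rw [hsum]
  refine Finset.sum_pos' (fun χ _ ↦ hsq χ) ⟨χ, ?_, (hsq χ).lt_of_ne' (mul_self_ne_zero.2 hχ)⟩
  exact mem_root_iff.2 fun h ↦ hχ (by simp [h.eq])

lemma exists_cartanEquivDual_symm_eq_smul_coroot (k : H.root) :
    ∃ d : ℂ, 0 < d ∧
      (IsKilling.cartanEquivDual H).symm k.1.toLinear = d • IsKilling.coroot k.1 := by
  have hk := H.isNonZero_coe_root k
  have hc := IsKilling.root_apply_cartanEquivDual_symm_ne_zero hk
  have hpos : 0 < traceForm ℂ H L (IsKilling.coroot k.1) (IsKilling.coroot k.1) := by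
    refine traceForm_self_pos (fun χ ↦ ?_) fun h ↦ hk (IsKilling.coroot_eq_zero_iff.1 h)
    rw [IsKilling.apply_coroot_eq_cast, Complex.intCast_im]
  rw [IsKilling.traceForm_coroot, IsKilling.root_apply_coroot hk] at hpos
  refine ⟨2 * (2 • (k.1 ((IsKilling.cartanEquivDual H).symm k.1.toLinear))⁻¹ • 2)⁻¹,
    mul_pos two_pos (RCLike.inv_pos.2 hpos), ?_⟩
  rw [IsKilling.coroot, ← Nat.cast_smul_eq_nsmul ℂ 2 (_ • (_ : H)), smul_smul, smul_smul]
  convert (one_smul ℂ _).symm using 2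
  simp only [smul_eq_mul, nsmul_eq_mul, Nat.cast_ofNat]
  field_simp

end KillingPositivity

section CasimirOperator

variable [IsKilling ℂ L] {σ : Type} [Fintype σ] (B : Module.Basis σ ℂ L)

/-- The basis dual to `B` with respect to the Killing form. -/
noncomputable def killingDual : Module.Basis σ ℂ L :=
  LinearMap.BilinForm.dualBasis (killingForm ℂ L) (IsKilling.killingForm_nondegenerate ℂ L) B

lemma killingDual_repr_apply (x : L) (i : σ) :
    (killingDual B).repr x i = killingForm ℂ L x (B i) :=
  LinearMap.BilinForm.dualBasis_repr_apply ..

variable (M : Type) [AddCommGroup M] [Module ℂ M] [LieRingModule L M] [LieModule ℂ L M]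

/-- The Casimir operator of `L` on `M`, computed in the basis `B`. -/
noncomputable def casimir : End ℂ M :=
  ∑ i, toEnd ℂ L M (B i) * toEnd ℂ L M (killingDual B i)

variable {M}

lemma casimir_apply (y : M) : casimir B M y = ∑ i, ⁅B i, ⁅killingDual B i, y⁆⁆ := by
  simp [casimir]

lemma repr_eq_killingForm_killingDual (x : L) (i : σ) :
    B.repr x i = killingForm ℂ L x (killingDual B i) := by
  have hsymm : (killingForm ℂ L).IsSymm := ⟨LieModule.traceForm_comm ℂ L L⟩
  have hdual : killingDual (killingDual B) = B := LinearMap.BilinForm.dualBasis_dualBasis _ hsymm B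
  conv_lhs => rw [← hdual]
  exact killingDual_repr_apply _ x i

lemma sum_killingForm_mul_killingForm (x : L) :
    ∑ i, killingForm ℂ L x (B i) * killingForm ℂ L x (killingDual B i) = killingForm ℂ L x x := by
  conv_rhs => rw [← B.sum_repr x, map_sum]
  refine Finset.sum_congr rfl fun i _ ↦ ?_
  rw [map_smul, B.sum_repr, repr_eq_killingForm_killingDual, smul_eq_mul, mul_comm]

lemma lie_eq_sum_killingForm_smul (x : L) (i : σ) :
    ⁅x, B i⁆ = ∑ j, killingForm ℂ L ⁅x, B i⁆ (killingDual B j) • B j := by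
  simp only [← repr_eq_killingForm_killingDual, B.sum_repr]

lemma lie_killingDual_eq_sum (x : L) (i : σ) :
    ⁅x, killingDual B i⁆ =
      -∑ j, killingForm ℂ L ⁅x, B j⁆ (killingDual B i) • killingDual B j := by
  have hswap (j : σ) : killingForm ℂ L ⁅x, B j⁆ (killingDual B i) =
      -killingForm ℂ L ⁅x, killingDual B i⁆ (B j) := by
    rw [killingForm, traceForm_comm, ← traceForm_apply_lie_apply, ← lie_skew, map_neg,
      LinearMap.neg_apply]
  simp only [hswap, ← killingDual_repr_apply, neg_smul, Finset.sum_neg_distrib, neg_neg,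
    (killingDual B).sum_repr]

lemma casimir_lie (x : L) (y : M) : casimir B M ⁅x, y⁆ = ⁅x, casimir B M y⁆ := by
  have hfst : ∑ i, ⁅⁅x, B i⁆, ⁅killingDual B i, y⁆⁆ =
      ∑ i, ∑ j, killingForm ℂ L ⁅x, B i⁆ (killingDual B j) • ⁅B j, ⁅killingDual B i, y⁆⁆ := by
    refine Finset.sum_congr rfl fun i _ ↦ ?_
    rw [lie_eq_sum_killingForm_smul B x i, sum_lie]
    simp only [smul_lie, ← lie_eq_sum_killingForm_smul B x i]
  have hsnd : ∑ i, ⁅B i, ⁅⁅x, killingDual B i⁆, y⁆⁆ =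
      -∑ i, ∑ j, killingForm ℂ L ⁅x, B j⁆ (killingDual B i) • ⁅B i, ⁅killingDual B j, y⁆⁆ := by
    simp only [lie_killingDual_eq_sum B x, neg_lie, lie_neg, sum_lie, lie_sum, smul_lie, lie_smul,
      Finset.sum_neg_distrib]
  simp only [casimir_apply, lie_sum, leibniz_lie x, lie_add, Finset.sum_add_distrib]
  rw [hfst, hsnd, Finset.sum_comm]
  simp

end CasimirOperator

section RootBasis

variable {H : LieSubalgebra ℂ L} [H.IsCartanSubalgebra] [FiniteDimensional ℂ L]

/-- `B` is a basis of root vectors and of vectors of `H`, where `B i` has weight `w i`; each root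
occurs exactly once. -/
structure IsRootBasis {σ : Type} (w : σ → Weight ℂ H L) (B : Module.Basis σ ℂ L) : Prop where
  mem_rootSpace : ∀ i, B i ∈ rootSpace H (w i)
  existsUnique : ∀ k : H.root, ∃! i, w i = k

namespace IsRootBasis

variable {σ : Type} [Fintype σ] {w : σ → Weight ℂ H L} {B : Module.Basis σ ℂ L}

lemma sum_root_eq_sum (hB : IsRootBasis w B) (p : H.root → Prop) (g : Weight ℂ H L → ℂ) :
    ∑ k : H.root with p k, g k = ∑ i, if ∃ k : H.root, w i = k ∧ p k then g (w i) else 0 := by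
  rw [← Finset.sum_filter]
  choose idx hidx huniq using hB.existsUnique
  refine Finset.sum_bij (fun k _ ↦ idx k) (fun k hk ↦ ?_) (fun k _ l _ hkl ↦ ?_)
    (fun i hi ↦ ?_) fun k _ ↦ by rw [hidx]
  · exact Finset.mem_filter.2 ⟨Finset.mem_univ _, k, hidx k, (Finset.mem_filter.1 hk).2⟩
  · exact Subtype.ext (by rw [← hidx k, hkl, hidx l])
  · obtain ⟨-, k, hik, hk⟩ := Finset.mem_filter.1 hi
    exact ⟨k, Finset.mem_filter.2 ⟨Finset.mem_univ _, hk⟩, (huniq k i hik).symm⟩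

variable [IsKilling ℂ L]

lemma killingDual_mem (hB : IsRootBasis w B) (i : σ) : killingDual B i ∈ rootSpace H (-w i) := by
  refine weightSpace_le_genWeightSpace L _ <| (mem_weightSpace _ _).2 fun h ↦
    (killingDual B).ext_elem fun j ↦ ?_
  have hj : ⁅(h : L), B j⁆ = w j h • B j :=
    IsKilling.lie_eq_smul_of_mem_rootSpace (hB.mem_rootSpace j) h
  have hinv : killingForm ℂ L ⁅(h : L), killingDual B i⁆ (B j) =
      -(w j h * killingForm ℂ L (killingDual B i) (B j)) := by
    rw [← lie_skew, map_neg, LinearMap.neg_apply, killingForm, traceForm_apply_lie_apply, hj,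
      map_smul, smul_eq_mul]
  rw [killingDual_repr_apply, LieSubalgebra.coe_bracket_of_module, hinv, map_smul,
    Finsupp.smul_apply, ← killingDual_repr_apply, Module.Basis.repr_self]
  obtain rfl | hij := eq_or_ne i j
  · simp
  · simp [hij]

lemma lie_killingDual (hB : IsRootBasis w B) (i : σ) :
    ⁅B i, killingDual B i⁆ = ((IsKilling.cartanEquivDual H).symm (w i).toLinear : L) := by
  have h := IsKilling.lie_eq_killingForm_smul_of_mem_rootSpace_of_mem_rootSpace_neg
    (hB.mem_rootSpace i) (hB.killingDual_mem i)
  rwa [← repr_eq_killingForm_killingDual, B.repr_self, Finsupp.single_eq_same, one_smul] at h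

end IsRootBasis

variable (H) [IsKilling ℂ L]

lemma exists_isRootBasis : ∃ (σ : Type) (_ : Fintype σ) (w : σ → Weight ℂ H L)
    (B : Module.Basis σ ℂ L), IsRootBasis w B := by
  have hinternal : DirectSum.IsInternal fun χ : Weight ℂ H L ↦ (rootSpace H χ).toSubmodule :=
    DirectSum.isInternal_submodule_of_iSupIndep_of_iSup_eq_top
      (LieSubmodule.iSupIndep_toSubmodule.mpr <| iSupIndep_genWeightSpace' ℂ H L)
      (LieSubmodule.iSup_toSubmodule_eq_top.mpr <| iSup_genWeightSpace_eq_top' ℂ H L)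
  let v (χ : Weight ℂ H L) := finBasis ℂ (rootSpace H χ).toSubmodule
  refine ⟨_, inferInstance, Sigma.fst, hinternal.collectedBasis v,
    hinternal.collectedBasis_mem v, fun k ↦ ?_⟩
  have hk : finrank ℂ (rootSpace H k.1).toSubmodule = 1 :=
    IsKilling.finrank_rootSpace_eq_one k.1 (H.isNonZero_coe_root k)
  refine ⟨⟨k, ⟨0, hk ▸ one_pos⟩⟩, rfl, ?_⟩
  rintro ⟨χ, n⟩ rfl
  have : Subsingleton (Fin (finrank ℂ (rootSpace H k.1).toSubmodule)) := hk ▸ inferInstance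
  exact congrArg _ (Subsingleton.elim _ _)

end RootBasis

section WeightForm

variable (H : LieSubalgebra ℂ L) [H.IsCartanSubalgebra] [FiniteDimensional ℂ L] [IsKilling ℂ L]

/-- The bilinear form on the dual of the Cartan subalgebra `H` induced by the Killing form. -/
noncomputable def weightForm : LinearMap.BilinForm ℂ (Dual ℂ H) :=
  LinearMap.lcomp ℂ ℂ (IsKilling.cartanEquivDual H).symm.toLinearMap

variable {H}

lemma weightForm_apply (κ ψ : Dual ℂ H) :
    weightForm H κ ψ = κ ((IsKilling.cartanEquivDual H).symm ψ) := rfl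

lemma killingForm_cartanEquivDual_symm (κ : Dual ℂ H) (x : H) :
    killingForm ℂ L ((IsKilling.cartanEquivDual H).symm κ : L) x = κ x :=
  LinearMap.congr_fun ((IsKilling.cartanEquivDual H).apply_symm_apply κ) x

lemma weightForm_comm (κ ψ : Dual ℂ H) : weightForm H κ ψ = weightForm H ψ κ := by
  rw [weightForm_apply, weightForm_apply, ← killingForm_cartanEquivDual_symm κ,
    ← killingForm_cartanEquivDual_symm ψ]
  exact traceForm_comm ℂ L L _ _

variable {ι : Type} [Fintype ι] (b : LieAlgebra.Basis ι H)

/-- The scalar `⟨κ, κ + 2ρ⟩` by which the Casimir element acts on a singular vector of weight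
`κ`. -/
noncomputable def casimirScalar (κ : Dual ℂ H) : ℂ := weightForm H κ (κ + twoRho b)

/-- `E` and `F` split the Casimir operator in the basis `B` into its scalar part and a part which
kills singular vectors. -/
structure IsTriangularCasimir {σ : Type} [Fintype σ] (B : Module.Basis σ ℂ L) (E F : σ → L) :
    Prop where
  mem_lieSpan_e : ∀ i, E i ∈ LieSubalgebra.lieSpan ℂ L (Set.range b.e)
  mem_lieSpan_f : ∀ i, F i ∈ LieSubalgebra.lieSpan ℂ L (Set.range b.f)
  casimir_apply : ∀ {M : Type} [AddCommGroup M] [Module ℂ M] [LieRingModule L M] [LieModule ℂ L M]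
    {κ : Dual ℂ H} {y : M}, (∀ x : H, ⁅(x : L), y⁆ = κ x • y) →
      casimir B M y = casimirScalar b κ • y + ∑ i, ⁅F i, ⁅E i, y⁆⁆

variable {b} {σ : Type} {w : σ → Weight ℂ H L} {B : Module.Basis σ ℂ L}

lemma IsRootBasis.killingForm_cartanEquivDual_symm_eq_zero (hB : IsRootBasis w B) {i : σ}
    (hi : (w i).IsNonZero) (κ : Dual ℂ H) :
    killingForm ℂ L ((IsKilling.cartanEquivDual H).symm κ : L) (B i) = 0 := by
  refine killingForm_apply_eq_zero_of_mem_rootSpace_of_add_ne_zero ℂ L H (α := 0) ?_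
    (hB.mem_rootSpace i) (by rwa [zero_add])
  rw [rootSpace_zero_eq]
  exact SetLike.coe_mem _

variable [Fintype σ]

lemma IsRootBasis.lie_lie_killingDual_of_isZero (hB : IsRootBasis w B) {i : σ} (hi : (w i).IsZero)
    {M : Type} [AddCommGroup M] [Module ℂ M] [LieRingModule L M] [LieModule ℂ L M]
    {κ : Dual ℂ H} {y : M} (hy : ∀ x : H, ⁅(x : L), y⁆ = κ x • y) :
    ⁅B i, ⁅killingDual B i, y⁆⁆ =
      (killingForm ℂ L ((IsKilling.cartanEquivDual H).symm κ : L) (B i) *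
        killingForm ℂ L ((IsKilling.cartanEquivDual H).symm κ : L) (killingDual B i)) • y := by
  have hlie {z : L} (hz : z ∈ rootSpace H (0 : H → ℂ)) :
      ⁅z, y⁆ = killingForm ℂ L ((IsKilling.cartanEquivDual H).symm κ : L) z • y := by
    rw [rootSpace_zero_eq] at hz
    exact (hy ⟨z, hz⟩).trans (by rw [← killingForm_cartanEquivDual_symm])
  have hmem := hB.mem_rootSpace i
  have hmem' := hB.killingDual_mem i
  rw [hi.eq] at hmem hmem'
  rw [neg_zero] at hmem'
  rw [hlie hmem', lie_smul, hlie hmem, smul_smul, mul_comm]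

lemma IsRootBasis.exists_triangular (hB : IsRootBasis w B) (i : σ) :
    ∃ E ∈ LieSubalgebra.lieSpan ℂ L (Set.range b.e),
      ∃ F ∈ LieSubalgebra.lieSpan ℂ L (Set.range b.f),
      ∀ {M : Type} [AddCommGroup M] [Module ℂ M] [LieRingModule L M] [LieModule ℂ L M]
        {κ : Dual ℂ H} {y : M}, (∀ x : H, ⁅(x : L), y⁆ = κ x • y) →
        ⁅B i, ⁅killingDual B i, y⁆⁆ =
          (killingForm ℂ L ((IsKilling.cartanEquivDual H).symm κ : L) (B i) *
            killingForm ℂ L ((IsKilling.cartanEquivDual H).symm κ : L) (killingDual B i)) • y +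
          (if ∃ k : H.root, w i = k ∧ b.base.IsPos k then weightForm H κ (w i).toLinear
            else 0) • y +
          ⁅F, ⁅E, y⁆⁆ := by
  by_cases hi : (w i).IsZero
  · refine ⟨0, zero_mem _, 0, zero_mem _, fun {M} _ _ _ _ κ y hy ↦ ?_⟩
    have hnpos : ¬∃ k : H.root, w i = k ∧ b.base.IsPos k := fun ⟨k, hk, _⟩ ↦
      H.isNonZero_coe_root k (hk ▸ hi)
    rw [hB.lie_lie_killingDual_of_isZero hi hy, if_neg hnpos, zero_smul, zero_lie, add_zero,
      add_zero]
  have hzero := hB.killingForm_cartanEquivDual_symm_eq_zero hi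
  obtain ⟨k, hk⟩ : ∃ k : H.root, w i = k :=
    ⟨⟨w i, mem_root_iff.2 hi⟩, rfl⟩
  have hmem := hB.mem_rootSpace i
  have hmem' := hB.killingDual_mem i
  rw [hk] at hmem hmem'
  by_cases hpos : b.base.IsPos k
  · refine ⟨B i, rootSpace_le_lieSpan_e b hpos hmem, killingDual B i,
      rootSpace_neg_le_lieSpan_f b hpos hmem', fun {M} _ _ _ _ κ y hy ↦ ?_⟩
    rw [hzero, zero_mul, zero_smul, zero_add, if_pos ⟨k, hk, hpos⟩, leibniz_lie,
      hB.lie_killingDual, hy, weightForm_apply]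
  · let := (IsKilling.rootSystem H).indexNeg
    have hneg : b.base.IsPos (-k) :=
      (RootPairing.Base.IsPos.or_neg (b := b.base) k).resolve_left hpos
    have hcoe : ((-k : H.root).1 : H → ℂ) = -k.1 := congrArg _ (coe_reflectionPerm_self k)
    refine ⟨killingDual B i, rootSpace_le_lieSpan_e b hneg (hcoe ▸ hmem'), B i,
      rootSpace_neg_le_lieSpan_f b hneg (by rwa [hcoe, neg_neg]), fun {M} _ _ _ _ κ y _ ↦ ?_⟩
    have hnpos : ¬∃ k : H.root, w i = k ∧ b.base.IsPos k := fun ⟨l, hl, hlpos⟩ ↦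
      hpos (Subtype.ext (hk.symm.trans hl) ▸ hlpos)
    rw [hzero, zero_mul, zero_smul, zero_add, if_neg hnpos, zero_smul, zero_add]

variable (b) in
theorem exists_isTriangularCasimir : ∃ (σ : Type) (_ : Fintype σ) (B : Module.Basis σ ℂ L)
    (E F : σ → L), IsTriangularCasimir b B E F := by
  obtain ⟨σ, _, w, B, hB⟩ := exists_isRootBasis H
  choose E hE F hF hEF using hB.exists_triangular (b := b)
  refine ⟨σ, inferInstance, B, E, F, hE, hF, fun {M} _ _ _ _ κ y hy ↦ ?_⟩
  have hρ : weightForm H κ (twoRho b) = ∑ i,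
      if ∃ k : H.root, w i = k ∧ b.base.IsPos k then weightForm H κ (w i).toLinear else 0 := by
    rw [twoRho, map_sum]
    exact hB.sum_root_eq_sum _ fun χ ↦ weightForm H κ χ.toLinear
  rw [casimirScalar, map_add, hρ, weightForm_apply κ κ, ← killingForm_cartanEquivDual_symm κ,
    ← sum_killingForm_mul_killingForm B, add_smul, Finset.sum_smul, Finset.sum_smul,
    ← Finset.sum_add_distrib, ← Finset.sum_add_distrib, casimir_apply]
  exact Finset.sum_congr rfl fun i _ ↦ hEF i hy

end WeightForm

section CasimirScalar

open scoped ComplexOrder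

variable {ι : Type} [Fintype ι] {H : LieSubalgebra ℂ L} [FiniteDimensional ℂ L] [IsKilling ℂ L]
  [H.IsCartanSubalgebra] (b : LieAlgebra.Basis ι H)

lemma exists_weightForm_baseSupp (j : ι) :
    ∃ d : ℂ, 0 < d ∧ ∀ κ, weightForm H κ (b.baseSupp j) = d * κ (b.h' j) := by
  obtain ⟨d, hd, h⟩ := exists_cartanEquivDual_symm_eq_smul_coroot (simpleRoot b j)
  rw [coe_simpleRoot, coroot_simpleRoot] at h
  exact ⟨d, hd, fun κ ↦ by rw [weightForm_apply, h, map_smul, smul_eq_mul]⟩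

lemma weightForm_rootSum (κ : Dual ℂ H) (s : Multiset ι) :
    weightForm H κ (rootSum b s) = (s.map fun j ↦ weightForm H κ (b.baseSupp j)).sum := by
  rw [rootSum, map_multiset_sum, Multiset.map_map]
  rfl

variable {b}

lemma weightForm_rootSum_nonpos {κ : Dual ℂ H} (hκ : ∀ j, κ (b.h' j) ≤ 0) (s : Multiset ι) :
    weightForm H κ (rootSum b s) ≤ 0 := by
  rw [weightForm_rootSum]
  refine Multiset.sum_induction (· ≤ 0) _ (fun _ _ ↦ add_nonpos) le_rfl fun c hc ↦ ?_
  obtain ⟨j, -, rfl⟩ := Multiset.mem_map.1 hc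
  obtain ⟨d, hd, h⟩ := exists_weightForm_baseSupp b j
  rw [h]
  exact mul_nonpos_of_nonneg_of_nonpos hd.le (hκ j)

lemma weightForm_rootSum_pos {κ : Dual ℂ H} (hκ : ∀ j, 0 < κ (b.h' j)) {s : Multiset ι}
    (hs : s ≠ 0) : 0 < weightForm H κ (rootSum b s) := by
  rw [weightForm_rootSum]
  refine Multiset.sum_induction_nonempty (0 < ·) (fun _ _ ↦ add_pos)
    (by simpa using hs) fun c hc ↦ ?_
  obtain ⟨j, -, rfl⟩ := Multiset.mem_map.1 hc
  obtain ⟨d, hd, h⟩ := exists_weightForm_baseSupp b j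
  rw [h]
  exact mul_pos hd (hκ j)

lemma casimirScalar_sub (κ γ : Dual ℂ H) :
    casimirScalar b κ - casimirScalar b (κ - γ) = weightForm H (2 • κ - γ + twoRho b) γ := by
  simp only [casimirScalar, map_add, map_sub, LinearMap.add_apply, LinearMap.sub_apply, two_nsmul,
    weightForm_comm γ κ, weightForm_comm γ (twoRho b)]
  ring

lemma casimirScalar_sub_ne_zero {κ : Dual ℂ H} {s : Multiset ι} (hs : s ≠ 0)
    (hκ : ∀ j, 0 < 2 * κ (b.h' j) - rootSum b s (b.h' j) + 2) :
    casimirScalar b κ - casimirScalar b (κ - rootSum b s) ≠ 0 := by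
  rw [casimirScalar_sub]
  refine (weightForm_rootSum_pos (fun j ↦ ?_) hs).ne'
  simpa [twoRho_apply_h', two_mul, two_smul] using hκ j

lemma weightForm_rootSum_self_pos {s : Multiset ι} (hs : s ≠ 0) :
    0 < weightForm H (rootSum b s) (rootSum b s) := by
  set t := (IsKilling.cartanEquivDual H).symm (rootSum b s) with ht
  have hreal (χ : Weight ℂ H L) : (χ t).im = 0 := by
    change (weightForm H χ.toLinear (rootSum b s)).im = 0
    rw [weightForm_rootSum]
    refine Multiset.sum_induction (fun c : ℂ ↦ c.im = 0) _ (fun c d hc hd ↦ by simp [hc, hd])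
      Complex.zero_im fun c hc ↦ ?_
    obtain ⟨j, -, rfl⟩ := Multiset.mem_map.1 hc
    obtain ⟨d, hd, h⟩ := exists_weightForm_baseSupp b j
    have hint : (χ (b.h' j)).im = 0 := by
      rw [← coroot_simpleRoot, IsKilling.apply_coroot_eq_cast, Complex.intCast_im]
    rw [h, Weight.toLinear_apply, Complex.mul_im, hint, ← (Complex.pos_iff.1 hd).2, mul_zero,
      zero_mul, add_zero]
  have hne : t ≠ 0 := by
    rw [ht, Ne, LinearEquiv.map_eq_zero_iff]
    refine fun h ↦ hs (rootSum_injective b ?_)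
    rw [h]
    simp [rootSum]
  have hself : traceForm ℂ H L t t = weightForm H (rootSum b s) (rootSum b s) :=
    killingForm_cartanEquivDual_symm (rootSum b s) t
  exact hself ▸ traceForm_self_pos hreal hne

lemma eq_zero_of_rootSum_apply_h'_nonpos {s : Multiset ι}
    (hs : ∀ j, rootSum b s (b.h' j) ≤ 0) : s = 0 := by
  by_contra h
  exact (weightForm_rootSum_self_pos h).not_ge (weightForm_rootSum_nonpos hs s)

variable (b) in
lemma neg_three_le_weight_apply_h' (χ : Weight ℂ H L) (j : ι) : -3 ≤ χ (b.h' j) := by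
  by_cases hχ : χ.IsZero
  · simp [hχ.eq]
  obtain ⟨k, rfl⟩ : ∃ k : H.root, χ = k :=
    ⟨⟨χ, mem_root_iff.2 hχ⟩, rfl⟩
  have hmem := RootPairing.pairingIn_pairingIn_mem_set_of_isCrystal_of_isRed
    (IsKilling.rootSystem H) k (simpleRoot b j)
  have hbound : -3 ≤ (IsKilling.rootSystem H).pairingIn ℤ k (simpleRoot b j) := by
    simp only [Set.mem_insert_iff, Set.mem_singleton_iff, Prod.mk.injEq] at hmem
    omega
  rw [← coroot_simpleRoot, ← intCast_pairingIn]
  exact_mod_cast hbound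

end CasimirScalar

lemma exists_linearMap_apply_eq {U V W : Type*} [AddCommGroup U] [Module ℂ U] [AddCommGroup V]
    [Module ℂ V] [AddCommGroup W] [Module ℂ W] {f : U →ₗ[ℂ] V} (hf : Function.Surjective f)
    {g : U →ₗ[ℂ] W} (h : ∀ u, f u = 0 → g u = 0) : ∃ φ : V →ₗ[ℂ] W, ∀ u, φ (f u) = g u := by
  refine ⟨(LinearMap.ker f).liftQ g h ∘ₗ (f.quotKerEquivOfSurjective hf).symm.toLinearMap,
    fun u ↦ ?_⟩
  have hu : (f.quotKerEquivOfSurjective hf).symm (f u) = (LinearMap.ker f).mkQ u :=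
    (LinearEquiv.symm_apply_eq _).2 rfl
  rw [LinearMap.comp_apply, LinearEquiv.coe_coe, hu]
  exact (LinearMap.ker f).liftQ_apply g u

section Generators

variable {ι : Type} [Fintype ι] {H : LieSubalgebra ℂ L} (b : LieAlgebra.Basis ι H)
variable {M N : Type*} [AddCommGroup M] [Module ℂ M] [LieRingModule L M] [LieModule ℂ L M]
  [AddCommGroup N] [Module ℂ N] [LieRingModule L N] [LieModule ℂ L N]

lemma lie_linearMap_eq_zero_iff {x : L} {φ : M →ₗ[ℂ] N} :
    ⁅x, φ⁆ = 0 ↔ ∀ y, φ ⁅x, y⁆ = ⁅x, φ y⁆ := by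
  simp only [LinearMap.ext_iff, LieHom.lie_apply, LinearMap.zero_apply, sub_eq_zero]
  exact forall_congr' fun _ ↦ eq_comm

lemma lie_mem_of_basis {S : Submodule ℂ M} (he : ∀ i, ∀ y ∈ S, ⁅b.e i, y⁆ ∈ S)
    (hf : ∀ i, ∀ y ∈ S, ⁅b.f i, y⁆ ∈ S) (x : L) {y : M} (hy : y ∈ S) : ⁅x, y⁆ ∈ S := by
  have hx : x ∈ LieSubalgebra.lieSpan ℂ L (Set.range b.e ∪ Set.range b.f) := by simp [b.span_ef]
  induction hx using LieSubalgebra.lieSpan_induction generalizing y with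
  | mem x hx =>
    obtain ⟨i, rfl⟩ | ⟨i, rfl⟩ := hx
    exacts [he i y hy, hf i y hy]
  | zero => simp
  | add x x' _ _ hx hx' => exact add_lie x x' y ▸ add_mem (hx hy) (hx' hy)
  | smul c x _ hx => exact smul_lie c x y ▸ S.smul_mem c (hx hy)
  | lie x x' _ _ hx hx' => exact lie_lie x x' y ▸ sub_mem (hx (hx' hy)) (hx' (hx hy))

lemma map_lie_of_basis {φ : M →ₗ[ℂ] N} (he : ∀ i y, φ ⁅b.e i, y⁆ = ⁅b.e i, φ y⁆)
    (hf : ∀ i y, φ ⁅b.f i, y⁆ = ⁅b.f i, φ y⁆) (x : L) (y : M) : φ ⁅x, y⁆ = ⁅x, φ y⁆ := by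
  have hx : x ∈ LieSubalgebra.lieSpan ℂ L (Set.range b.e ∪ Set.range b.f) := by simp [b.span_ef]
  induction hx using LieSubalgebra.lieSpan_induction generalizing y with
  | mem x hx =>
    obtain ⟨i, rfl⟩ | ⟨i, rfl⟩ := hx
    exacts [he i y, hf i y]
  | zero => simp
  | add x x' _ _ hx hx' => simp [hx, hx']
  | smul c x _ hx => simp [hx]
  | lie x x' _ _ hx hx' => simp [lie_lie, hx, hx']

variable {b} {κ : Dual ℂ H} {y : M}

lemma IsSingular.lie_eq_zero (hy : IsSingular b κ y) {x : L}
    (hx : x ∈ LieSubalgebra.lieSpan ℂ L (Set.range b.e)) : ⁅x, y⁆ = 0 := by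
  induction hx using LieSubalgebra.lieSpan_induction with
  | mem x hx =>
    obtain ⟨i, rfl⟩ := hx
    exact hy.lie_e i
  | zero => exact zero_lie y
  | add x x' _ _ hx hx' => rw [add_lie, hx, hx', add_zero]
  | smul c x _ hx => rw [smul_lie, hx, smul_zero]
  | lie x x' _ _ hx hx' => rw [lie_lie, hx, hx', lie_zero, lie_zero, sub_zero]

lemma IsSingular.lower_surjective [IsSimpleOrder (LieSubmodule ℂ L M)] (hy : IsSingular b κ y)
    (hy0 : y ≠ 0) : Function.Surjective fun a ↦ lower b M a y := by
  let P : LieSubmodule ℂ L M :=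
    { LinearMap.range ((lower b M).toLinearMap.flip y) with
      lie_mem {x m} hm := lie_mem_of_basis b (S := LinearMap.range _)
        (by rintro i _ ⟨a, rfl⟩; exact ⟨_, (hy.lie_e_lower i a).symm⟩)
        (by rintro i _ ⟨a, rfl⟩; exact ⟨_, lower_ι_mul b i a y⟩) x hm }
  have hyP : y ∈ P := ⟨1, by simp⟩
  obtain hP | hP := IsSimpleOrder.eq_bot_or_eq_top P
  · exact absurd ((LieSubmodule.mem_bot y).1 (hP ▸ hyP)) hy0
  · exact fun z ↦ (hP ▸ LieSubmodule.mem_top z : z ∈ P)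

lemma IsSingular.exists_linearMap_of_lower_eq_zero [IsSimpleOrder (LieSubmodule ℂ L M)]
    (hy : IsSingular b κ y) (hy0 : y ≠ 0) {x : N}
    (h : ∀ a, lower b M a y = 0 → lower b N a x = 0) :
    ∃ φ : M →ₗ[ℂ] N, φ y = x ∧ ∀ i, ⁅b.f i, φ⁆ = 0 := by
  have hsurj := hy.lower_surjective hy0
  obtain ⟨φ, hφ⟩ := exists_linearMap_apply_eq (f := (lower b M).toLinearMap.flip y)
    (g := (lower b N).toLinearMap.flip x) hsurj h
  simp only [LinearMap.flip_apply, AlgHom.toLinearMap_apply] at hφ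
  refine ⟨φ, by simpa using hφ 1, fun i ↦ lie_linearMap_eq_zero_iff.2 fun u ↦ ?_⟩
  obtain ⟨a, rfl⟩ := hsurj u
  simp only [hφ, ← lower_ι_mul]

lemma IsSingular.linearMap_ext [IsSimpleOrder (LieSubmodule ℂ L M)] (hy : IsSingular b κ y)
    (hy0 : y ≠ 0) {φ ψ : M →ₗ[ℂ] N} (hφ : ∀ i, ⁅b.f i, φ⁆ = 0) (hψ : ∀ i, ⁅b.f i, ψ⁆ = 0)
    (h : φ y = ψ y) : φ = ψ := by
  ext u
  obtain ⟨a, rfl⟩ := hy.lower_surjective hy0 u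
  rw [lower_map b φ fun i ↦ lie_linearMap_eq_zero_iff.1 (hφ i),
    lower_map b ψ fun i ↦ lie_linearMap_eq_zero_iff.1 (hψ i), h]

lemma IsSingular.lie_h_linearMap [IsSimpleOrder (LieSubmodule ℂ L M)] (hy : IsSingular b κ y)
    (hy0 : y ≠ 0) {φ : M →ₗ[ℂ] N} (hφ : ∀ i, ⁅b.f i, φ⁆ = 0) {χ : Dual ℂ H}
    (hχ : ∀ x : H, ⁅(x : L), φ y⁆ = χ x • φ y) (x : H) : ⁅(x : L), φ⁆ = (χ - κ) x • φ := by
  refine hy.linearMap_ext hy0 (fun i ↦ ?_) (fun i ↦ by rw [lie_smul, hφ, smul_zero]) ?_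
  · rw [leibniz_lie, hφ, lie_zero, add_zero, ← lie_skew, ← LieSubalgebra.coe_bracket_of_module,
      ← b.baseSupp_apply_smul_f, smul_lie, hφ, smul_zero]
  · rw [LieHom.lie_apply, hχ, hy.lie_h, map_smul, LinearMap.sub_apply, LinearMap.smul_apply,
      sub_smul]

open scoped ComplexOrder in
lemma IsSingular.apply_h'_nonneg [FiniteDimensional ℂ M] (hy : IsSingular b κ y) (hy0 : y ≠ 0)
    (i : ι) : 0 ≤ κ (b.h' i) := by
  have hprim : (b.sl2 i).HasPrimitiveVectorWith y (κ (b.h' i)) :=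
    ⟨hy0, hy.lie_h (b.h' i), hy.lie_e i⟩
  obtain ⟨n, hn⟩ := hprim.exists_nat
  exact hn ▸ n.cast_nonneg

end Generators

section HighestWeightModules

open scoped ComplexOrder

variable {ι : Type} [Fintype ι] {H : LieSubalgebra ℂ L} [FiniteDimensional ℂ L] [IsKilling ℂ L]
  [H.IsCartanSubalgebra] {b : LieAlgebra.Basis ι H}
variable {M : Type} [AddCommGroup M] [Module ℂ M] [LieRingModule L M] [LieModule ℂ L M]
  {κ : Dual ℂ H}

lemma IsTriangularCasimir.casimir_eq_smul {σ : Type} [Fintype σ] {B : Module.Basis σ ℂ L}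
    {E F : σ → L} (hB : IsTriangularCasimir b B E F) {y : M} (hy : IsSingular b κ y) :
    casimir B M y = casimirScalar b κ • y := by
  simp [hB.casimir_apply hy.lie_h, hy.lie_eq_zero (hB.mem_lieSpan_e _)]

lemma IsSingular.casimirScalar_eq {y : M} (hy : IsSingular b κ y) {ψ : Dual ℂ H}
    {a : FreeAlgebra ℂ ι} (ha : IsSingular b ψ (lower b M a y)) (ha0 : lower b M a y ≠ 0) :
    casimirScalar b κ = casimirScalar b ψ := by
  obtain ⟨σ, _, B, E, F, hB⟩ := exists_isTriangularCasimir b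
  refine smul_left_injective ℂ ha0 ?_
  change _ • _ = _ • _
  rw [← hB.casimir_eq_smul ha, lower_map b (casimir B M) fun i ↦ casimir_lie B (b.f i),
    hB.casimir_eq_smul hy, map_smul]

lemma IsSingular.eq_zero_of_isSingular_lower [FiniteDimensional ℂ M] {y : M}
    (hy : IsSingular b κ y) (hy0 : y ≠ 0) {s : Multiset ι} {a : FreeAlgebra ℂ ι}
    (ha : IsSingular b (κ - rootSum b s) (lower b M a y)) (ha0 : lower b M a y ≠ 0) : s = 0 := by
  by_contra hs
  refine casimirScalar_sub_ne_zero hs (fun j ↦ ?_) (sub_eq_zero.2 (hy.casimirScalar_eq ha ha0))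
  have hκ := hy.apply_h'_nonneg hy0 j
  have hκs := ha.apply_h'_nonneg ha0 j
  rw [LinearMap.sub_apply] at hκs
  linear_combination (exp := 1) hκ + hκs + two_pos (α := ℂ)

variable {W Z : Type} [AddCommGroup W] [Module ℂ W] [LieRingModule L W] [LieModule ℂ L W]
  [AddCommGroup Z] [Module ℂ Z] [LieRingModule L Z] [LieModule ℂ L Z] [FiniteDimensional ℂ Z]
  {w : W} {z : Z}

/-- A polynomial of minimal degree violating the claim would produce a second singular vector in
the submodule generated by `z`, which the Casimir operator rules out. -/
lemma IsSingular.lower_eq_zero_of_lower_eq_zero (hw : IsSingular b κ w) (hz : IsSingular b κ z)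
    (hw0 : w ≠ 0) {a : FreeAlgebra ℂ ι} (ha : lower b W a w = 0) : lower b Z a z = 0 := by
  obtain ⟨n, han⟩ := exists_mem_degreeLT a
  induction n generalizing a with
  | zero =>
    exact lower_eq_zero_of_homogeneous b hw.lie_h (fun s hs ↦ absurd hs s.card.not_lt_zero) han ha
  | succ n ih =>
    refine lower_eq_zero_of_homogeneous b hw.lie_h (fun s hs c hc hcw ↦ ?_) han ha
    have hsing : IsSingular b (κ - rootSum b s) (lower b Z c z) := by
      refine ⟨lie_h_lower_of_weight b hz.lie_h hc, fun i ↦ ?_⟩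
      rw [hz.lie_e_lower]
      refine ih ?_ (raise_mem_degreeLT _ _ _ (homogeneous_le_degreeLT hs hc))
      rw [← hw.lie_e_lower, hcw, lie_zero]
    by_contra hne
    have hz0 : z ≠ 0 := by
      rintro rfl
      exact hne (map_zero _)
    obtain rfl := hz.eq_zero_of_isSingular_lower hz0 hsing hne
    rw [eq_zero_of_mem_homogeneous_zero hc hw0 hcw, map_zero, LinearMap.zero_apply] at hne
    exact hne rfl

theorem IsSingular.exists_lieModuleHom [IsSimpleOrder (LieSubmodule ℂ L W)]
    (hw : IsSingular b κ w) (hw0 : w ≠ 0) (hz : IsSingular b κ z) :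
    ∃ Φ : W →ₗ⁅ℂ, L⁆ Z, Φ w = z := by
  obtain ⟨φ, rfl, hf⟩ := hw.exists_linearMap_of_lower_eq_zero hw0 (x := z)
    fun a ha ↦ hw.lower_eq_zero_of_lower_eq_zero hz hw0 ha
  replace hf i := lie_linearMap_eq_zero_iff.1 (hf i)
  have he (i : ι) (u : W) : φ ⁅b.e i, u⁆ = ⁅b.e i, φ u⁆ := by
    obtain ⟨a, rfl⟩ := hw.lower_surjective hw0 u
    simp only [hw.lie_e_lower, lower_map b φ hf, hz.lie_e_lower]
  exact ⟨{ φ with map_lie' {x u} := map_lie_of_basis b he hf x u }, rfl⟩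

end HighestWeightModules

section SingularAnnihilators

variable {ι : Type} [Fintype ι] {H : LieSubalgebra ℂ L} {b : LieAlgebra.Basis ι H}
variable {V Y : Type} [AddCommGroup V] [Module ℂ V] [LieRingModule L V]
  [AddCommGroup Y] [Module ℂ Y] [LieRingModule L Y] [LieModule ℂ L Y]
variable {κ ψ μ : Dual ℂ H} {v : V} {η : Dual ℂ V}

variable (b μ v η) in
/-- A singular vector `v` of weight `μ`, together with a functional `η` which is normalised at `v`
and kills the image of every lowering operator. -/
structure IsHighestWeightPair : Prop extends IsSingular b μ v where
  apply_self : η v = 1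
  apply_lie_f : ∀ i u, η ⁅b.f i, u⁆ = 0

lemma IsHighestWeightPair.ne_zero (hv : IsHighestWeightPair b μ v η) : v ≠ 0 := by
  rintro rfl
  simpa using hv.apply_self

variable [LieModule ℂ L V]

lemma IsSingular.tmul {y : Y} (hy : IsSingular b κ y) (hv : IsSingular b ψ v) :
    IsSingular b (κ + ψ) (y ⊗ₜ[ℂ] v) where
  lie_h x := by
    rw [TensorProduct.LieModule.lie_tmul_right, hy.lie_h, hv.lie_h, TensorProduct.tmul_smul,
      ← TensorProduct.smul_tmul', LinearMap.add_apply, add_smul]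
  lie_e i := by
    rw [TensorProduct.LieModule.lie_tmul_right, hy.lie_e, hv.lie_e, TensorProduct.zero_tmul,
      TensorProduct.tmul_zero, add_zero]

lemma IsHighestWeightPair.lower_eq_zero_of_lower_tmul (hv : IsHighestWeightPair b μ v η)
    {a : FreeAlgebra ℂ ι} {y : Y} (h : lower b (Y ⊗[ℂ] V) a (y ⊗ₜ v) = 0) :
    lower b Y a y = 0 := by
  let contract : Y ⊗[ℂ] V →ₗ[ℂ] Y := TensorProduct.rid ℂ Y ∘ₗ η.lTensor Y
  have hcontract (i : ι) (t : Y ⊗[ℂ] V) : contract ⁅b.f i, t⁆ = ⁅b.f i, contract t⁆ := by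
    induction t using TensorProduct.induction_on with
    | zero => simp
    | tmul y u => simp [contract, TensorProduct.LieModule.lie_tmul_right, hv.apply_lie_f]
    | add t t' ht ht' => rw [lie_add, map_add, ht, ht', map_add, lie_add]
  simpa [h, contract, hv.apply_self] using (lower_map b contract hcontract a (y ⊗ₜ v)).symm

variable (b μ) in
/-- The polynomials in the lowering operators that kill every singular vector of weight `k • μ` in
every representation. -/
def singularAnnihilator (k : ℕ) : Submodule ℂ (FreeAlgebra ℂ ι) where
  carrier := {a | ∀ (Y : Type) [AddCommGroup Y] [Module ℂ Y] [LieRingModule L Y] [LieModule ℂ L Y]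
    (y : Y), IsSingular b (k • μ) y → lower b Y a y = 0}
  add_mem' ha ha' Y _ _ _ _ y hy := by simp [ha Y y hy, ha' Y y hy]
  zero_mem' := by simp
  smul_mem' c _ ha Y _ _ _ _ y hy := by simp [ha Y y hy]

namespace IsHighestWeightPair

variable (hv : IsHighestWeightPair b μ v η)
include hv

/-- Tensoring with `v` raises the weight of a singular vector by `μ`, and contracting with `η`
recovers the original vector. -/
lemma singularAnnihilator_antitone : Antitone (singularAnnihilator b μ) :=
  antitone_nat_of_succ_le fun k _ ha _ _ _ _ _ _ hy ↦
    hv.lower_eq_zero_of_lower_tmul (ha _ _ (succ_nsmul μ k ▸ hy.tmul hv.toIsSingular))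

lemma mem_singularAnnihilator_of_mem_polySeq {g : ℕ → FreeAlgebra ℂ ι} (hg : g ∈ polySeq _)
    (h : ∀ k, g k ∈ singularAnnihilator b μ k) (k m : ℕ) : g k ∈ singularAnnihilator b μ m :=
  fun Y _ _ _ _ y hy ↦ eq_zero_of_mem_polySeq
    (map_mem_polySeq ((lower b Y).toLinearMap.flip y) hg)
    (fun l hl ↦ hv.singularAnnihilator_antitone hl (h l) Y y hy) k

lemma raise_mem_singularAnnihilator {i : ι} (hμ : μ (b.h' i) ≠ 0) {a : FreeAlgebra ℂ ι}
    (ha : ∀ k, a ∈ singularAnnihilator b μ k) (t : ℂ) (k : ℕ) :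
    raise b.A i t a ∈ singularAnnihilator b μ k := by
  have hG := isRaisingFamily_e b μ i
  have hlevel (l : ℕ) : raise b.A i (l * μ (b.h' i)) a ∈ singularAnnihilator b μ k := by
    refine hv.mem_singularAnnihilator_of_mem_polySeq (hG.mem_polySeq _ (const_mem_polySeq a))
      (fun m Y _ _ _ _ y hy ↦ ?_) l k
    rw [← hG.lie_lower m Y y hy, ha m Y y hy, lie_zero]
  have h0 := hlevel 0
  have h1 := hlevel 1
  rw [Nat.cast_zero, zero_mul] at h0
  rw [Nat.cast_one, one_mul] at h1
  refine (Submodule.smul_mem_iff _ hμ).1 ?_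
  have haffine := raise_affine b.A i 0 (μ (b.h' i)) t a
  rw [sub_zero] at haffine
  exact haffine ▸ add_mem (Submodule.smul_mem _ _ h0) (Submodule.smul_mem _ _ h1)

end IsHighestWeightPair

lemma isSingular_lower_of_raise_eq_zero {s : Multiset ι} {a : FreeAlgebra ℂ ι}
    (ha : a ∈ homogeneous s) (h : ∀ i t, lower b Y (raise b.A i t a) = 0) :
    IsSingular b (-rootSum b s) (lower b Y a : Y →ₗ[ℂ] Y) where
  lie_h x := by
    ext y
    simp [LieHom.lie_apply, lie_h_lower b ha]
  lie_e i := by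
    ext y
    simp [LieHom.lie_apply, lie_e_lower, h]

variable [FiniteDimensional ℂ L] [IsKilling ℂ L] [H.IsCartanSubalgebra] [FiniteDimensional ℂ Y]

open scoped ComplexOrder in
/-- Otherwise `a` would be a singular vector of `End Y` of weight `-rootSum b s`, which is dominant
only for `s = 0`. -/
lemma IsHighestWeightPair.lower_eq_zero_of_raise_eq_zero (hv : IsHighestWeightPair b μ v η)
    {s : Multiset ι} {a : FreeAlgebra ℂ ι} (has : a ∈ homogeneous s) (hav : lower b V a v = 0)
    (h : ∀ i t, lower b Y (raise b.A i t a) = 0) : lower b Y a = 0 := by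
  by_contra hne
  have hs : s = 0 := eq_zero_of_rootSum_apply_h'_nonpos (b := b) fun j ↦
    neg_nonneg.1 ((isSingular_lower_of_raise_eq_zero has h).apply_h'_nonneg hne j)
  exact hne (by rw [eq_zero_of_mem_homogeneous_zero (hs ▸ has) hv.ne_zero hav, map_zero])

theorem IsHighestWeightPair.lower_eq_zero (hv : IsHighestWeightPair b μ v η)
    (hμ : ∀ i, μ (b.h' i) ≠ 0) {a : FreeAlgebra ℂ ι} (ha : ∀ k, a ∈ singularAnnihilator b μ k) :
    lower b Y a = 0 := by
  obtain ⟨n, han⟩ := exists_mem_degreeLT a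
  induction n using Nat.strong_induction_on generalizing a with
  | _ n ih =>
    obtain ⟨c, hc, hcard, rfl⟩ := exists_homogeneous_decomposition han
    have hcomp (s : Multiset ι) (k : ℕ) : c s ∈ singularAnnihilator b μ k :=
      fun Z _ _ _ _ z hz ↦ lower_component_eq_zero b hz.lie_h hc (ha k Z z hz) s
    rw [map_sum]
    refine Finset.sum_eq_zero fun s hs ↦ hv.lower_eq_zero_of_raise_eq_zero (hc s)
      (hcomp s 1 V v (by simpa using hv.toIsSingular)) fun i t ↦ ?_
    exact ih s.card (hcard s hs) (hv.raise_mem_singularAnnihilator (hμ i) (hcomp s) t)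
      (raise_mem_degreeLT b.A i t (homogeneous_le_degreeLT s.card.lt_succ_self (hc s)))

end SingularAnnihilators

section WeightVectors

open scoped ComplexOrder

variable {ι : Type} [Fintype ι] {H : LieSubalgebra ℂ L} [FiniteDimensional ℂ L] [IsKilling ℂ L]
  [H.IsCartanSubalgebra] {b : LieAlgebra.Basis ι H}
variable {V Y : Type} [AddCommGroup V] [Module ℂ V] [LieRingModule L V] [LieModule ℂ L V]
  [AddCommGroup Y] [Module ℂ Y] [LieRingModule L Y] [LieModule ℂ L Y]
variable {κ ψ μ : Dual ℂ H} {v : V} {η : Dual ℂ V}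

variable (b) in
lemma casimirScalar_sub_smul_mem_polySeq (μ γ : Dual ℂ H) (a : FreeAlgebra ℂ ι) :
    (fun k : ℕ ↦ (casimirScalar b (k • μ) - casimirScalar b (k • μ - γ)) • a) ∈ polySeq _ := by
  have haffine (k : ℕ) : (casimirScalar b (k • μ) - casimirScalar b (k • μ - γ)) • a =
      (k : ℂ) • (2 * weightForm H μ γ) • a + weightForm H (-γ + twoRho b) γ • a := by
    simp only [casimirScalar_sub, map_add, map_sub, map_neg, map_nsmul, LinearMap.add_apply,
      LinearMap.sub_apply, LinearMap.neg_apply, LinearMap.smul_apply]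
    module
  rw [funext haffine]
  exact add_mem (natCast_smul_mem_polySeq (const_mem_polySeq _)) (const_mem_polySeq _)

lemma IsTriangularCasimir.smul_lower_eq_sum {σ : Type} [Fintype σ] {B : Module.Basis σ ℂ L}
    {E F : σ → L} (hB : IsTriangularCasimir b B E F) {y : Y} (hy : IsSingular b κ y)
    {s : Multiset ι} {a : FreeAlgebra ℂ ι} (ha : a ∈ homogeneous s) :
    (casimirScalar b κ - casimirScalar b (κ - rootSum b s)) • lower b Y a y =
      ∑ i, ⁅F i, ⁅E i, lower b Y a y⁆⁆ := by
  have hcas := hB.casimir_apply (lie_h_lower_of_weight b hy.lie_h ha)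
  rw [lower_map b (casimir B Y) fun i ↦ casimir_lie B (b.f i), hB.casimir_eq_smul hy,
    map_smul] at hcas
  rw [sub_smul, hcas, add_sub_cancel_left]

/-- The Casimir operator expresses `a` through polynomials `G i` of lower degree on singular
vectors of weight `k • μ`, polynomially in `k`; hence the same expression for `k = 1` holds on
all finite-dimensional representations. -/
lemma IsHighestWeightPair.exists_smul_lower_eq_sum [FiniteDimensional ℂ Y]
    (hv : IsHighestWeightPair b μ v η) (hμ : ∀ i, μ (b.h' i) ≠ 0) {s : Multiset ι}
    {a : FreeAlgebra ℂ ι} (ha : a ∈ homogeneous s) (hav : lower b V a v = 0) :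
    ∃ (σ : Type) (_ : Fintype σ) (F : σ → L) (G : σ → FreeAlgebra ℂ ι),
      (∀ i n, a ∈ degreeLT (n + 1) → G i ∈ degreeLT n) ∧ (∀ i, lower b V (G i) v = 0) ∧
      ∀ x : Y, (casimirScalar b μ - casimirScalar b (μ - rootSum b s)) • lower b Y a x =
        ∑ i, ⁅F i, lower b Y (G i) x⁆ := by
  obtain ⟨σ, _, B, E, F, hB⟩ := exists_isTriangularCasimir b
  choose p hp using fun i ↦ exists_lower_eq_toEnd b (hB.mem_lieSpan_f i)
  choose G hG using fun i ↦ exists_isRaisingFamily b μ (hB.mem_lieSpan_e i)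
  let T (k : ℕ) : FreeAlgebra ℂ ι := (casimirScalar b (k • μ) -
    casimirScalar b (k • μ - rootSum b s)) • a - ∑ i, p i * G i k a
  have hlower (k : ℕ) (Z : Type) [AddCommGroup Z] [Module ℂ Z] [LieRingModule L Z]
      [LieModule ℂ L Z] (z : Z) : lower b Z (T k) z = (casimirScalar b (k • μ) -
        casimirScalar b (k • μ - rootSum b s)) • lower b Z a z -
          ∑ i, ⁅F i, lower b Z (G i k a) z⁆ := by
    simp [T, hp]
  have hpoly : T ∈ polySeq _ := by
    have hsum := sum_mem (t := Finset.univ) fun i _ ↦ map_mem_polySeq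
      (LinearMap.mulLeft ℂ (p i)) ((hG i).mem_polySeq _ (const_mem_polySeq a))
    exact sub_mem (casimirScalar_sub_smul_mem_polySeq b μ _ a) (by simpa [Finset.sum_fn] using hsum)
  have hT (k : ℕ) : T k ∈ singularAnnihilator b μ k := fun Z _ _ _ _ z hz ↦ by
    rw [hlower, hB.smul_lower_eq_sum hz ha, sub_eq_zero]
    exact Finset.sum_congr rfl fun i _ ↦ by rw [(hG i).lie_lower k Z z hz]
  refine ⟨σ, inferInstance, F, fun i ↦ G i 1 a, fun i n ↦ (hG i).mem_degreeLT 1 n a,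
    fun i ↦ ?_, fun x ↦ ?_⟩
  · rw [← (hG i).lie_lower 1 V v (by simpa using hv.toIsSingular), hav, lie_zero]
  · have hT1 := hv.lower_eq_zero (Y := Y) hμ (hv.mem_singularAnnihilator_of_mem_polySeq hpoly hT 1)
    have := hlower 1 Y x
    rwa [hT1, LinearMap.zero_apply, one_smul, eq_comm, sub_eq_zero] at this

lemma IsHighestWeightPair.lower_apply_eq_zero_of_homogeneous [FiniteDimensional ℂ Y]
    (hv : IsHighestWeightPair b μ v η) (hμ : ∀ i, 0 < μ (b.h' i))
    (hY : ∀ (χ : Weight ℂ H Y) i, -(μ (b.h' i) + 1) ≤ χ (b.h' i))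
    (hψ : ∀ i, 0 ≤ (μ - ψ) (b.h' i))
    {x : Y} (hx : ∀ h : H, ⁅(h : L), x⁆ = ψ h • x) {s : Multiset ι} {a : FreeAlgebra ℂ ι}
    (ha : a ∈ homogeneous s) (hav : lower b V a v = 0)
    (ih : ∀ c ∈ degreeLT s.card, lower b V c v = 0 → lower b Y c x = 0) : lower b Y a x = 0 := by
  have := b.isLieAbelian_cartan
  by_contra hne
  have hs : s ≠ 0 := by
    rintro rfl
    exact hne (by simp [eq_zero_of_mem_homogeneous_zero ha hv.ne_zero hav])
  let χ : Weight ℂ H Y := ⟨ψ - rootSum b s, fun h ↦ hne <| (LieSubmodule.mem_bot _).1 <|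
    h ▸ weightSpace_le_genWeightSpace Y _
      ((mem_weightSpace _ _).2 fun h ↦ lie_h_lower_of_weight b hx ha h)⟩
  obtain ⟨σ, _, F, G, hdeg, hGv, hsum⟩ := hv.exists_smul_lower_eq_sum (Y := Y)
    (fun i ↦ (hμ i).ne') ha hav
  have hcard := homogeneous_le_degreeLT s.card.lt_succ_self ha
  refine smul_ne_zero (casimirScalar_sub_ne_zero (b := b) (κ := μ) hs fun j ↦ ?_) hne ?_
  · have hχ : -(μ (b.h' j) + 1) ≤ ψ (b.h' j) - rootSum b s (b.h' j) := hY χ j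
    have hψj : 0 ≤ μ (b.h' j) - ψ (b.h' j) := hψ j
    linear_combination (exp := 1) hψj + hχ + one_pos (α := ℂ)
  · rw [hsum]
    exact Finset.sum_eq_zero fun i _ ↦ by rw [ih _ (hdeg i _ hcard) (hGv i), lie_zero]

theorem IsHighestWeightPair.lower_apply_eq_zero [FiniteDimensional ℂ Y]
    (hv : IsHighestWeightPair b μ v η) (hμ : ∀ i, 0 < μ (b.h' i))
    (hY : ∀ (χ : Weight ℂ H Y) i, -(μ (b.h' i) + 1) ≤ χ (b.h' i))
    (hψ : ∀ i, 0 ≤ (μ - ψ) (b.h' i))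
    {x : Y} (hx : ∀ h : H, ⁅(h : L), x⁆ = ψ h • x) {a : FreeAlgebra ℂ ι}
    (hav : lower b V a v = 0) : lower b Y a x = 0 := by
  obtain ⟨n, han⟩ := exists_mem_degreeLT a
  induction n using Nat.strong_induction_on generalizing a with
  | _ n ih =>
    exact lower_eq_zero_of_homogeneous b hv.lie_h (fun s hs c hc hcv ↦
      hv.lower_apply_eq_zero_of_homogeneous hμ hY hψ hx hc hcv fun d hd hdv ↦ ih _ hs hdv hd)
      han hav

end WeightVectors

section DualModules

variable {V : Type} [AddCommGroup V] [Module ℂ V] [LieRingModule L V] [LieModule ℂ L V]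

lemma isSimpleOrder_lieSubmodule_dual [FiniteDimensional ℂ V]
    [IsSimpleOrder (LieSubmodule ℂ L V)] : IsSimpleOrder (LieSubmodule ℂ L (Dual ℂ V)) where
  exists_pair_ne := by
    have hV : Nontrivial V := (LieSubmodule.nontrivial_iff ℂ L V).1 inferInstance
    exact ((LieSubmodule.nontrivial_iff ℂ L (Dual ℂ V)).2 inferInstance).exists_pair_ne
  eq_bot_or_eq_top P := by
    let Q : LieSubmodule ℂ L V :=
      { (P : Submodule ℂ (Dual ℂ V)).dualCoannihilator with
        lie_mem {x u} hu := by
          refine (Submodule.mem_dualCoannihilator _).2 fun p hp ↦ neg_eq_zero.1 ?_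
          rw [← Module.Dual.lie_apply]
          exact (Submodule.mem_dualCoannihilator u).1 hu _ (P.lie_mem hp) }
    have hQ : (Q : Submodule ℂ V).dualAnnihilator = P :=
      Subspace.dualCoannihilator_dualAnnihilator_eq
    refine (IsSimpleOrder.eq_bot_or_eq_top Q).symm.imp (fun h ↦ ?_) fun h ↦ ?_ <;>
      simpa [h, eq_comm] using hQ

variable {ι : Type} [Fintype ι] {H : LieSubalgebra ℂ L} {b : LieAlgebra.Basis ι H}
variable {μ : Dual ℂ H} {v : V} {η : Dual ℂ V}

lemma IsHighestWeightPair.lie_f (hv : IsHighestWeightPair b μ v η) (i : ι) : ⁅b.f i, η⁆ = 0 := by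
  ext u
  rw [Module.Dual.lie_apply, hv.apply_lie_f, neg_zero, LinearMap.zero_apply]

variable [IsSimpleOrder (LieSubmodule ℂ L V)]

lemma IsHighestWeightPair.apply_lie_h (hv : IsHighestWeightPair b μ v η) (h : H) (u : V) :
    η ⁅(h : L), u⁆ = μ h * η u := by
  let toTrivial : ℂ →ₗ[ℂ] TrivialLieModule ℂ L ℂ := (TrivialLieModule.equiv ℂ L ℂ).symm
  have hlie (x : L) (c : ℂ) : ⁅x, toTrivial c⁆ = 0 := trivial_lie_zero _ _ _ _
  have hf (i : ι) : ⁅b.f i, toTrivial ∘ₗ η⁆ = 0 :=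
    lie_linearMap_eq_zero_iff.2 fun u ↦ by simp [hv.apply_lie_f, hlie]
  have hη := LinearMap.congr_fun
    (hv.lie_h_linearMap hv.ne_zero hf (χ := 0) (by simp [hlie]) h) u
  rw [LieHom.lie_apply, LinearMap.comp_apply, hlie] at hη
  simpa [toTrivial] using congrArg (TrivialLieModule.equiv ℂ L ℂ) hη

/-- The functional is the map to the trivial module sending `v` to `1`: a homogeneous polynomial
killing `v` kills `1`, as it either vanishes or moves `1` to a nonzero weight. -/
lemma IsSingular.exists_isHighestWeightPair (hv : IsSingular b μ v) (hv0 : v ≠ 0) :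
    ∃ η, IsHighestWeightPair b μ v η := by
  have := b.isLieAbelian_cartan
  let one : TrivialLieModule ℂ L ℂ := (TrivialLieModule.equiv ℂ L ℂ).symm 1
  have hone (h : H) : ⁅(h : L), one⁆ = (0 : Dual ℂ H) h • one := by
    rw [trivial_lie_zero, LinearMap.zero_apply, zero_smul]
  obtain ⟨η, hη, hf⟩ := hv.exists_linearMap_of_lower_eq_zero hv0 (x := one) fun a ha ↦ by
    obtain ⟨n, han⟩ := exists_mem_degreeLT a
    refine lower_eq_zero_of_homogeneous b hv.lie_h (fun s _ c hc hcv ↦ ?_) han ha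
    obtain rfl | hs := eq_or_ne s 0
    · simp [eq_zero_of_mem_homogeneous_zero hc hv0 hcv]
    · by_contra hne
      refine (rootSum_injective b).ne hs (LinearMap.ext fun h ↦ ?_)
      have hweight := lie_h_lower_of_weight b hone hc h
      rw [trivial_lie_zero, eq_comm, smul_eq_zero_iff_left hne] at hweight
      simpa [rootSum] using hweight
  refine ⟨(TrivialLieModule.equiv ℂ L ℂ).toLinearMap ∘ₗ η, hv, ?_, fun i u ↦ ?_⟩
  · simp [hη, one]
  · rw [LinearMap.comp_apply, lie_linearMap_eq_zero_iff.1 (hf i), trivial_lie_zero, map_zero]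

/-- The opposite basis exchanges raising and lowering operators, so the functional becomes the
singular vector and evaluation at `v` the functional. -/
lemma IsHighestWeightPair.dual (hv : IsHighestWeightPair b μ v η) :
    IsHighestWeightPair b.symm (-μ) η (Dual.eval ℂ V v) where
  lie_h h := by
    ext u
    simp [hv.apply_lie_h]
  lie_e := hv.lie_f
  apply_self := hv.apply_self
  apply_lie_f i p := by
    rw [b.symm_f, Dual.eval_apply, Module.Dual.lie_apply, hv.lie_e, map_zero, neg_zero]

end DualModules

section SingularVectors

variable {ι : Type} [Fintype ι] {H : LieSubalgebra ℂ L} (b : LieAlgebra.Basis ι H)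
variable (M : Type*) [AddCommGroup M] [Module ℂ M] [LieRingModule L M] [LieModule ℂ L M]

/-- The space of singular vectors of weight `κ` in the representation `M`. -/
def singularVectors (κ : Dual ℂ H) : Submodule ℂ M where
  carrier := {y | IsSingular b κ y}
  add_mem' hy hy' := ⟨fun x ↦ by rw [lie_add, hy.lie_h, hy'.lie_h, smul_add],
    fun i ↦ by rw [lie_add, hy.lie_e, hy'.lie_e, add_zero]⟩
  zero_mem' := ⟨by simp, by simp⟩
  smul_mem' c _ hy := ⟨fun x ↦ by rw [lie_smul, hy.lie_h, smul_comm],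
    fun i ↦ by rw [lie_smul, hy.lie_e, smul_zero]⟩

variable {b} [FiniteDimensional ℂ L] [IsKilling ℂ L] [H.IsCartanSubalgebra] {κ μ : Dual ℂ H}

theorem IsSingular.finrank_lieModuleHom {W Z : Type} [AddCommGroup W] [Module ℂ W]
    [LieRingModule L W] [LieModule ℂ L W] [AddCommGroup Z] [Module ℂ Z] [LieRingModule L Z]
    [LieModule ℂ L Z] [FiniteDimensional ℂ Z] [IsSimpleOrder (LieSubmodule ℂ L W)] {w : W}
    (hw : IsSingular b κ w) (hw0 : w ≠ 0) :
    finrank ℂ (W →ₗ⁅ℂ, L⁆ Z) = finrank ℂ (singularVectors b Z κ) := by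
  let evalAt : (W →ₗ⁅ℂ, L⁆ Z) →ₗ[ℂ] singularVectors b Z κ :=
    { toFun Φ := ⟨Φ w, fun x ↦ by rw [← Φ.map_lie, hw.lie_h, map_smul],
        fun i ↦ by rw [← Φ.map_lie, hw.lie_e, map_zero]⟩
      map_add' _ _ := rfl
      map_smul' _ _ := rfl }
  refine (LinearEquiv.ofBijective evalAt ⟨fun Φ Ψ h ↦ ?_, fun z ↦ ?_⟩).finrank_eq
  · have hf (Θ : W →ₗ⁅ℂ, L⁆ Z) (i : ι) : ⁅b.f i, (Θ : W →ₗ[ℂ] Z)⁆ = 0 :=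
      lie_linearMap_eq_zero_iff.2 fun u ↦ Θ.map_lie _ u
    exact LieModuleHom.ext fun u ↦ LinearMap.congr_fun
      (hw.linearMap_ext hw0 (hf Φ) (hf Ψ) (congrArg Subtype.val h)) u
  · obtain ⟨Φ, hΦ⟩ := hw.exists_lieModuleHom hw0 z.2
    exact ⟨Φ, Subtype.ext hΦ⟩

open scoped ComplexOrder in
/-- Singular vectors of `U →ₗ[ℂ] Y` are killed by the raising operators, hence determined by
their value at the lowest weight vector `ξ`. -/
theorem IsHighestWeightPair.finrank_singularVectors {U Y : Type} [AddCommGroup U] [Module ℂ U]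
    [LieRingModule L U] [LieModule ℂ L U] [AddCommGroup Y] [Module ℂ Y] [LieRingModule L Y]
    [LieModule ℂ L Y] [FiniteDimensional ℂ Y] [IsSimpleOrder (LieSubmodule ℂ L U)] {ξ : U}
    {η : Dual ℂ U} (hξ : IsHighestWeightPair b.symm (-μ) ξ η) (hμ : ∀ i, 0 < μ (b.h' i))
    (hκ : ∀ i, 0 ≤ κ (b.h' i)) (hY : ∀ (χ : Weight ℂ H Y) i, χ (b.h' i) ≤ μ (b.h' i) + 1) :
    finrank ℂ (singularVectors b (U →ₗ[ℂ] Y) κ) = finrank ℂ (weightSpace Y ⇑(κ - μ)) := by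
  let evalAt : singularVectors b (U →ₗ[ℂ] Y) κ →ₗ[ℂ] weightSpace Y ⇑(κ - μ) :=
    { toFun φ := ⟨φ.1 ξ, (mem_weightSpace _ _).2 fun h ↦ by
        have hφ := LinearMap.congr_fun (φ.2.lie_h h) ξ
        rw [LieHom.lie_apply, hξ.lie_h, sub_eq_iff_eq_add] at hφ
        rw [LieSubalgebra.coe_bracket_of_module, hφ]
        simp [add_smul, sub_eq_add_neg]⟩
      map_add' _ _ := rfl
      map_smul' _ _ := rfl }
  refine (LinearEquiv.ofBijective evalAt ⟨fun φ ψ h ↦ ?_, fun x ↦ ?_⟩).finrank_eq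
  · exact Subtype.ext (hξ.linearMap_ext hξ.ne_zero φ.2.lie_e ψ.2.lie_e (congrArg Subtype.val h))
  · have hx := (mem_weightSpace _ _).1 x.2
    obtain ⟨φ, hφx, hφ⟩ := hξ.exists_linearMap_of_lower_eq_zero hξ.ne_zero (x := x.1) fun a ↦
      hξ.lower_apply_eq_zero (Y := Y) (ψ := κ - μ) (by simpa using hμ)
        (fun χ i ↦ by simpa using hY χ i) (by simpa using hκ) hx
    refine ⟨⟨φ, fun h ↦ ?_, hφ⟩, Subtype.ext hφx⟩
    simpa using hξ.lie_h_linearMap hξ.ne_zero hφ (χ := κ - μ) (by rw [hφx]; exact hx) h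

end SingularVectors

section Tensor

variable {U V W Y : Type} [AddCommGroup U] [Module ℂ U] [AddCommGroup V] [Module ℂ V]
  [FiniteDimensional ℂ V] [AddCommGroup W] [Module ℂ W] [FiniteDimensional ℂ W]
  [AddCommGroup Y] [Module ℂ Y]

/-- The identification of `Y ⊗ V ⊗ U` with `Hom(W, Hom(V*, Y))`, for `U` the dual of `W`. -/
noncomputable def tensorEquivLinearMap (e : U ≃ₗ[ℂ] Dual ℂ W) :
    (Y ⊗[ℂ] (V ⊗[ℂ] U)) ≃ₗ[ℂ] (W →ₗ[ℂ] Dual ℂ V →ₗ[ℂ] Y) :=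
  TensorProduct.congr (.refl ℂ Y) (TensorProduct.comm ℂ V U) ≪≫ₗ
    TensorProduct.leftComm ℂ Y U V ≪≫ₗ
    TensorProduct.congr e (TensorProduct.comm ℂ Y V ≪≫ₗ
      TensorProduct.congr (evalEquiv ℂ V) (.refl ℂ Y) ≪≫ₗ dualTensorHomEquiv ℂ (Dual ℂ V) Y) ≪≫ₗ
    dualTensorHomEquiv ℂ W (Dual ℂ V →ₗ[ℂ] Y)

lemma tensorEquivLinearMap_tmul (e : U ≃ₗ[ℂ] Dual ℂ W) (y : Y) (v : V) (u : U) (w : W)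
    (ξ : Dual ℂ V) :
    tensorEquivLinearMap e (y ⊗ₜ (v ⊗ₜ u)) w ξ = (e u w * ξ v) • y := by
  simp [tensorEquivLinearMap, smul_smul]

variable [LieRingModule L U] [LieRingModule L W] [LieModule ℂ L W]

lemma IsDualPair.exists_linearEquiv (h : IsDualPair (L := L) W U) :
    ∃ e : U ≃ₗ[ℂ] Dual ℂ W, ∀ (x : L) u, e ⁅x, u⁆ = ⁅x, e u⁆ := by
  obtain ⟨B, hW, hU, hlie⟩ := h
  have hB : B.IsPerfPair := .of_injective
    ((injective_iff_map_eq_zero B).2 fun w hw ↦ hW w (LinearMap.congr_fun hw))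
    ((injective_iff_map_eq_zero B.flip).2 fun u hu ↦ hU u (LinearMap.congr_fun hu))
  refine ⟨B.flip.toPerfPair, fun x u ↦ LinearMap.ext fun w ↦ ?_⟩
  simpa using eq_neg_of_add_eq_zero_right (hlie x w u)

variable [LieModule ℂ L U] [LieRingModule L V] [LieModule ℂ L V] [LieRingModule L Y]
  [LieModule ℂ L Y]

lemma tensorEquivLinearMap_lie {e : U ≃ₗ[ℂ] Dual ℂ W} (he : ∀ (x : L) u, e ⁅x, u⁆ = ⁅x, e u⁆)
    (x : L) (t : Y ⊗[ℂ] (V ⊗[ℂ] U)) :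
    tensorEquivLinearMap e ⁅x, t⁆ = ⁅x, tensorEquivLinearMap e t⁆ := by
  induction t with
  | zero => simp
  | add t t' ht ht' => simp [ht, ht']
  | tmul y s =>
    induction s with
    | zero => simp
    | add s s' hs hs' => simp only [TensorProduct.tmul_add, lie_add, map_add, hs, hs']
    | tmul v u =>
      ext w ξ
      simp only [TensorProduct.LieModule.lie_tmul_right, TensorProduct.tmul_add, map_add,
        LieHom.lie_apply, LinearMap.add_apply, LinearMap.sub_apply, tensorEquivLinearMap_tmul, he,
        Module.Dual.lie_apply, lie_smul]
      module

theorem IsDualPair.finrank_maxTrivSubmodule_tensor (h : IsDualPair (L := L) W U) :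
    finrank ℂ (maxTrivSubmodule ℂ L (Y ⊗[ℂ] (V ⊗[ℂ] U))) =
      finrank ℂ (W →ₗ⁅ℂ, L⁆ (Dual ℂ V →ₗ[ℂ] Y)) := by
  obtain ⟨e, he⟩ := h.exists_linearEquiv
  let E : (Y ⊗[ℂ] (V ⊗[ℂ] U)) ≃ₗ⁅ℂ, L⁆ (W →ₗ[ℂ] Dual ℂ V →ₗ[ℂ] Y) :=
    { tensorEquivLinearMap e with map_lie' := tensorEquivLinearMap_lie he _ _ }
  exact (maxTrivEquiv E).toLinearEquiv.finrank_eq.trans maxTrivLinearMapEquivLieModuleHom.finrank_eq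

end Tensor

section Invariants

variable [FiniteDimensional ℂ L] {H : LieSubalgebra ℂ L} [H.IsCartanSubalgebra]

lemma IsHWIrrep.exists_isSingular [IsKilling ℂ L] {r : ℕ} {b : LieAlgebra.Basis (Fin r) H}
    (hb : IsBase H b.baseSupp) {μ : Dual ℂ H} {V : Type} [AddCommGroup V] [Module ℂ V]
    [LieRingModule L V] [LieModule ℂ L V] (hV : IsHWIrrep H b.baseSupp μ V) :
    ∃ v : V, v ≠ 0 ∧ IsSingular b μ v := by
  obtain ⟨-, v, hv0, hv, hpos⟩ := hV
  refine ⟨v, hv0, hv, fun i ↦ hpos (b.baseSupp i) ⟨hb.isRoot i, Pi.single i 1, ?_⟩ _ ?_⟩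
  · simp [Pi.single_apply]
  · exact (isChevalleySystem_basis b).e_mem i

lemma IsRoot.finrank_weightSpace [IsKilling ℂ L] {χ : Dual ℂ H} (hχ : IsRoot H χ) :
    finrank ℂ (weightSpace L ⇑χ) = 1 := by
  obtain ⟨k, rfl⟩ := hχ.exists_root_eq
  have hk : weightSpace L (k : Weight ℂ H L) = rootSpace H k := by
    refine (weightSpace_le_genWeightSpace L _).antisymm fun x hx ↦ ?_
    exact (mem_weightSpace _ _).2 fun h ↦ IsKilling.lie_eq_smul_of_mem_rootSpace hx h
  exact hk ▸ IsKilling.finrank_rootSpace_eq_one _ (H.isNonZero_coe_root k)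

open scoped ComplexOrder in
lemma IsBase.weight_apply_le_add_one [IsKilling ℂ L] {r : ℕ} {α : Fin r → Dual ℂ H}
    {t : Fin r → H} (hα : IsBase H α) (ht : ∀ j, IsCoroot H (α j) (t j)) {μ : Dual ℂ H}
    (hμ : ∀ j, 2 ≤ μ (t j)) (χ : Weight ℂ H L) (j : Fin r) : χ (t j) ≤ μ (t j) + 1 := by
  obtain ⟨b, -, rfl⟩ := hα.exists_basis ht
  have hχ : χ (b.h' j) ≤ 3 := by simpa using neg_three_le_weight_apply_h' b.symm χ j
  linear_combination (exp := 1) hχ + hμ j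

open scoped ComplexOrder in
theorem statement4_general [IsSemisimple ℂ L] {r : ℕ} {α : Fin r → Dual ℂ H} {hc : Fin r → H}
    (hbase : IsBase H α) (hcoroot : ∀ j, IsCoroot H (α j) (hc j)) {μ νbar : Dual ℂ H}
    (hμ : ∀ j, 0 < μ (hc j)) {V U W Y : Type}
    [AddCommGroup V] [Module ℂ V] [LieRingModule L V] [LieModule ℂ L V] [FiniteDimensional ℂ V]
    [AddCommGroup U] [Module ℂ U] [LieRingModule L U] [LieModule ℂ L U]
    [AddCommGroup W] [Module ℂ W] [LieRingModule L W] [LieModule ℂ L W] [FiniteDimensional ℂ W]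
    [AddCommGroup Y] [Module ℂ Y] [LieRingModule L Y] [LieModule ℂ L Y] [FiniteDimensional ℂ Y]
    (hV : IsHWIrrep H α μ V) (hW : IsHWIrrep H α νbar W) (hdual : IsDualPair (L := L) W U)
    (hY : ∀ (χ : Weight ℂ H Y) j, χ (hc j) ≤ μ (hc j) + 1) :
    finrank ℂ (maxTrivSubmodule ℂ L (Y ⊗[ℂ] (V ⊗[ℂ] U))) =
      finrank ℂ (weightSpace Y ⇑(νbar - μ)) := by
  obtain ⟨b, rfl, rfl⟩ := hbase.exists_basis hcoroot
  have := hV.1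
  have := hW.1
  have := isSimpleOrder_lieSubmodule_dual (L := L) (V := V)
  obtain ⟨v, hv0, hv⟩ := hV.exists_isSingular hbase
  obtain ⟨w, hw0, hw⟩ := hW.exists_isSingular hbase
  obtain ⟨ξ, hξ⟩ := hv.exists_isHighestWeightPair hv0
  calc
    _ = finrank ℂ (W →ₗ⁅ℂ, L⁆ (Dual ℂ V →ₗ[ℂ] Y)) := hdual.finrank_maxTrivSubmodule_tensor
    _ = finrank ℂ (singularVectors b (Dual ℂ V →ₗ[ℂ] Y) νbar) := hw.finrank_lieModuleHom hw0
    _ = finrank ℂ (weightSpace Y ⇑(νbar - μ)) :=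
      hξ.dual.finrank_singularVectors hμ (hw.apply_h'_nonneg hw0) hY

end Invariants

/-- If `β := ν̄ - μ` is a root and `⟨μ, α_j∨⟩ ≥ 2` for every simple root
`α_j`, then the `𝔤`-invariant subspace of `adj(𝔤) ⊗ V_μ ⊗ V_ν` has dimension exactly `1`. -/
theorem statement4
    {L : Type} [LieRing L] [LieAlgebra ℂ L] [FiniteDimensional ℂ L]
    [LieAlgebra.IsSemisimple ℂ L]
    (H : LieSubalgebra ℂ L) [H.IsCartanSubalgebra]
    {r : ℕ} (α : Fin r → Module.Dual ℂ H) (hc : Fin r → H)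
    (hbase : IsBase H α) (hcoroot : ∀ j, IsCoroot H (α j) (hc j))
    (μ ν νbar : Module.Dual ℂ H) (hμ : ∀ j, ∃ n : ℕ, 2 ≤ n ∧ μ (hc j) = (n : ℂ))
    (hν : IsDomInt hc ν)
    (Vμ : Type) [AddCommGroup Vμ] [Module ℂ Vμ] [LieRingModule L Vμ]
    [LieModule ℂ L Vμ] [FiniteDimensional ℂ Vμ]
    (Vν : Type) [AddCommGroup Vν] [Module ℂ Vν] [LieRingModule L Vν]
    [LieModule ℂ L Vν] [FiniteDimensional ℂ Vν]
    (Wν : Type) [AddCommGroup Wν] [Module ℂ Wν] [LieRingModule L Wν]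
    [LieModule ℂ L Wν] [FiniteDimensional ℂ Wν]
    (hVμ : IsHWIrrep H α μ Vμ)
    (hVν : IsHWIrrep H α ν Vν) (hWν : IsHWIrrep H α νbar Wν)
    (hdual : IsDualPair (L := L) Wν Vν)
    (hroot : IsRoot H (νbar - μ)) :
    Module.finrank ℂ (maxTrivSubmodule ℂ L (L ⊗[ℂ] (Vμ ⊗[ℂ] Vν))) = 1 := by
  open scoped ComplexOrder in
  have hμ_two (j : Fin r) : 2 ≤ μ (hc j) := by
    obtain ⟨n, hn, hj⟩ := hμ j
    exact hj ▸ Nat.ofNat_le_cast.2 hn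
  open scoped ComplexOrder in
  exact (statement4_general hbase hcoroot (fun j ↦ two_pos.trans_le (hμ_two j)) hVμ hWν hdual
    (hbase.weight_apply_le_add_one hcoroot hμ_two)).trans hroot.finrank_weightSpace

end AdjPaper
end

section
/- Let μ and ν be dominant integral weights of 𝔤 such that β := ν̄ − μ is a root. Suppose there is a short simple root α_j (i.e. some root of the same simple factor is strictly longer than α_j) with ⟨μ, α_j∨⟩ = 0 such that β is weakly orthogonal to α_j (i.e. ⟨β, α_j⟩ = 0 and β + α_j is a root). Then the 𝔤-invariant subspace of adj(𝔤) ⊗ V_μ ⊗ V_ν is zero. -/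
open scoped TensorProduct Classical
open LieAlgebra LieModule Module

namespace AdjPaper

variable {L : Type} [LieRing L] [LieAlgebra ℂ L]

/-- `t ∈ 𝔥` represents the weight `χ` via the Killing form: `κ(t, ·) = χ` on `𝔥`.  Under
this identification, `⟨χ, ψ⟩ = ψ t` for weights `χ, ψ`. -/
def IsKillingDual (H : LieSubalgebra ℂ L) (χ : Module.Dual ℂ H) (t : H) : Prop :=
  ∀ x : H, killingForm ℂ L (t : L) (x : L) = χ x

/-- Two roots lie in the same simple factor iff they are connected by a chain of pairwise
non-orthogonal roots (orthogonality w.r.t. the Killing form). -/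
def SameFactor (H : LieSubalgebra ℂ L) [H.IsCartanSubalgebra] (χ ψ : Module.Dual ℂ H) : Prop :=
  Relation.ReflTransGen
    (fun a b => IsRoot H a ∧ IsRoot H b ∧ ∃ ta : H, IsKillingDual H a ta ∧ b ta ≠ 0) χ ψ

/-!
An invariant tensor in `𝔤 ⊗ V_μ ⊗ V_ν` is an equivariant pairing `Φ : V_μ* × V_ν* → 𝔤`, where `V_μ*`
is generated by a lowest weight vector `ξ` of weight `-μ` and `V_ν*` by a highest weight vector `w`
of weight `ν̄`. Moving raising operators across the pairing shows that `Φ` is determined by its value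
`Φ(ξ, w)`, which lies in the root space `𝔤_β` for `β = ν̄ - μ`. Since `μ` and `ν̄` both vanish on the
coroot of `α_j`, the root vector `e` of `α_j` kills `ξ` and `w`, hence also `Φ(ξ, w)`. But `ad e` is
injective on `𝔤_β`: if `y` is a nonzero vector of weight `-(β + α_j)`, then `⁅e, y⁆` spans `𝔤_{-β}`,
and a `z ∈ 𝔤_β` with `⁅e, z⁆ = 0` is orthogonal to it under the Killing form.
-/

section CyclicVectors

variable {R 𝔤 M : Type*} [CommRing R] [LieRing 𝔤] [AddCommGroup M] [Module R M]
  [LieRingModule 𝔤 M]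

variable (R) in
/-- The vector `m` generates `M` under repeated action of the elements of `P`; when `P` spans a
Lie subalgebra `𝔫` this says `U(𝔫) m = M`. -/
def IsCyclicVector (P : Set 𝔤) (m : M) : Prop :=
  ∀ K : Submodule R M, m ∈ K → (∀ x ∈ P, ∀ u ∈ K, ⁅x, u⁆ ∈ K) → K = ⊤

lemma isCyclicVector_of_isIrreducible [LieAlgebra R 𝔤] [LieModule R 𝔤 M] [IsIrreducible R 𝔤 M]
    {P : Set 𝔤} {m : M} (hm : m ≠ 0)
    (h : ∀ K : Submodule R M, m ∈ K → (∀ x ∈ P, ∀ u ∈ K, ⁅x, u⁆ ∈ K) → ∀ y : 𝔤, ⁅y, m⁆ ∈ K) :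
    IsCyclicVector R P m := by
  let K₀ : Submodule R M :=
    sInf {K : Submodule R M | m ∈ K ∧ ∀ x ∈ P, ∀ u ∈ K, ⁅x, u⁆ ∈ K}
  have K₀_le {K : Submodule R M} (hmK : m ∈ K) (hPK : ∀ x ∈ P, ∀ u ∈ K, ⁅x, u⁆ ∈ K) :
      K₀ ≤ K := sInf_le ⟨hmK, hPK⟩
  have hmK₀ : m ∈ K₀ := Submodule.mem_sInf.mpr fun K hK ↦ hK.1
  have hPK₀ (x) (hx : x ∈ P) (u) (hu : u ∈ K₀) : ⁅x, u⁆ ∈ K₀ :=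
    Submodule.mem_sInf.mpr fun K hK ↦ hK.2 x hx u (K₀_le hK.1 hK.2 hu)
  -- By the Leibniz rule the `u` with `u, ⁅𝔤, u⁆ ⊆ K₀` form a `P`-stable subspace, so minimality of
  -- `K₀` makes `K₀` a Lie submodule.
  let S : Submodule R M :=
    { carrier := {u | u ∈ K₀ ∧ ∀ y : 𝔤, ⁅y, u⁆ ∈ K₀}
      add_mem' := fun ha hb ↦
        ⟨K₀.add_mem ha.1 hb.1, fun y ↦ by rw [lie_add]; exact K₀.add_mem (ha.2 y) (hb.2 y)⟩
      zero_mem' := ⟨K₀.zero_mem, fun y ↦ by rw [lie_zero]; exact K₀.zero_mem⟩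
      smul_mem' := fun c _ ha ↦
        ⟨K₀.smul_mem c ha.1, fun y ↦ by rw [lie_smul]; exact K₀.smul_mem c (ha.2 y)⟩ }
  have hK₀S : K₀ ≤ S := K₀_le ⟨hmK₀, h K₀ hmK₀ hPK₀⟩ fun x hx u hu ↦
    ⟨hPK₀ x hx u hu.1, fun y ↦ by
      rw [leibniz_lie]; exact K₀.add_mem (hu.2 _) (hPK₀ x hx _ (hu.2 y))⟩
  let K₁ : LieSubmodule R 𝔤 M := { K₀ with lie_mem := fun {y _} hu ↦ (hK₀S hu).2 y }
  have hK₁ : K₁ = ⊤ := (eq_bot_or_eq_top K₁).resolve_left fun hbot ↦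
    hm ((LieSubmodule.eq_bot_iff K₁).mp hbot m hmK₀)
  refine fun K hmK hPK ↦ eq_top_iff.mpr fun u _ ↦ K₀_le hmK hPK ?_
  exact (hK₁ ▸ LieSubmodule.mem_top u : u ∈ K₁)

end CyclicVectors

section Pairings

variable {R 𝔤 M W N : Type*} [CommRing R] [LieRing 𝔤] [LieAlgebra R 𝔤]
  [AddCommGroup M] [Module R M] [LieRingModule 𝔤 M]
  [AddCommGroup W] [Module R W] [LieRingModule 𝔤 W] [LieModule R 𝔤 W]
  [AddCommGroup N] [Module R N] [LieRingModule 𝔤 N] [LieModule R 𝔤 N]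

lemma lie_pairing_apply (Φ : M →ₗ⁅R,𝔤⁆ (W →ₗ[R] N)) (x : 𝔤) (m : M) (w : W) :
    ⁅x, Φ m w⁆ = Φ ⁅x, m⁆ w + Φ m ⁅x, w⁆ := by
  rw [LieModuleHom.map_lie, LieHom.lie_apply, sub_add_cancel]

lemma pairing_apply_eq_zero_of_isCyclicVector (Φ : M →ₗ⁅R,𝔤⁆ (W →ₗ[R] N)) {P : Set 𝔤} {m₀ : M}
    {w : W} (hm₀ : IsCyclicVector R P m₀) (hw : ∀ x ∈ P, ⁅x, w⁆ = 0) (h : Φ m₀ w = 0) (m : M) :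
    Φ m w = 0 := by
  let K : Submodule R M := LinearMap.ker ((Φ : M →ₗ[R] W →ₗ[R] N).flip w)
  have hPK (x) (hx : x ∈ P) (u) (hu : u ∈ K) : ⁅x, u⁆ ∈ K := by
    have hΦu : Φ u w = 0 := hu
    have := lie_pairing_apply Φ x u w
    rw [hΦu, hw x hx, lie_zero, map_zero, add_zero] at this
    exact this.symm
  exact (hm₀ K h hPK ▸ Submodule.mem_top : m ∈ K)

lemma pairing_eq_zero_of_isIrreducible [IsIrreducible R 𝔤 W] (Φ : M →ₗ⁅R,𝔤⁆ (W →ₗ[R] N)) {w : W}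
    (hw : w ≠ 0) (h : ∀ m, Φ m w = 0) : Φ = 0 := by
  let K : LieSubmodule R 𝔤 W :=
    { LinearMap.ker (Φ : M →ₗ[R] W →ₗ[R] N).flip with
      lie_mem := fun {x u} hu ↦ by
        have hΦu (m : M) : Φ m u = 0 := LinearMap.congr_fun (LinearMap.mem_ker.mp hu) m
        refine LinearMap.mem_ker.mpr (LinearMap.ext fun m ↦ ?_)
        have := lie_pairing_apply Φ x m u
        rw [hΦu, hΦu, lie_zero, zero_add] at this
        exact this.symm }
  have hwK : w ∈ K := LinearMap.mem_ker.mpr (LinearMap.ext h)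
  have hK : K = ⊤ := (eq_bot_or_eq_top K).resolve_left fun hbot ↦
    hw ((LieSubmodule.eq_bot_iff K).mp hbot w hwK)
  ext m u
  have hu : u ∈ K := hK ▸ LieSubmodule.mem_top u
  exact LinearMap.congr_fun (LinearMap.mem_ker.mp hu) m

end Pairings

section Contraction

variable {R 𝔤 A V U : Type*} [CommRing R]
  [AddCommGroup A] [Module R A]
  [AddCommGroup V] [Module R V] [Module.Free R V] [Module.Finite R V]
  [AddCommGroup U] [Module R U] [Module.Free R U] [Module.Finite R U]

variable (R A V U) in
/-- The contraction `A ⊗ (V ⊗ U) ≃ Hom(V*, Hom(U*, A))`, regarding a tensor as a bilinear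
`A`-valued pairing of the duals of `V` and `U`. -/
noncomputable def contraction :
    A ⊗[R] (V ⊗[R] U) ≃ₗ[R] (Dual R V →ₗ[R] Dual R U →ₗ[R] A) :=
  TensorProduct.comm R A (V ⊗[R] U) ≪≫ₗ TensorProduct.assoc R V U A ≪≫ₗ
    TensorProduct.congr (evalEquiv R V)
      (TensorProduct.congr (evalEquiv R U) (.refl R A) ≪≫ₗ dualTensorHomEquiv R (Dual R U) A) ≪≫ₗ
    dualTensorHomEquiv R (Dual R V) (Dual R U →ₗ[R] A)

@[simp] lemma contraction_tmul_tmul (a : A) (v : V) (u : U) (ξ : Dual R V) (η : Dual R U) :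
    contraction R A V U (a ⊗ₜ (v ⊗ₜ u)) ξ η = (ξ v * η u) • a := by
  simp [contraction, mul_smul]

variable [LieRing 𝔤] [LieAlgebra R 𝔤] [LieRingModule 𝔤 A] [LieModule R 𝔤 A]
  [LieRingModule 𝔤 V] [LieModule R 𝔤 V] [LieRingModule 𝔤 U] [LieModule R 𝔤 U]

lemma contraction_lie (x : 𝔤) (T : A ⊗[R] (V ⊗[R] U)) :
    contraction R A V U ⁅x, T⁆ = ⁅x, contraction R A V U T⁆ := by
  have on_tmul (a : A) (v : V) (u : U) : contraction R A V U ⁅x, a ⊗ₜ[R] (v ⊗ₜ[R] u)⁆ =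
      ⁅x, contraction R A V U (a ⊗ₜ (v ⊗ₜ u))⁆ := by
    ext ξ η
    simp only [TensorProduct.LieModule.lie_tmul_right, TensorProduct.tmul_add, map_add,
      LinearMap.add_apply, LieHom.lie_apply, LinearMap.sub_apply, contraction_tmul_tmul,
      Dual.lie_apply, lie_smul]
    module
  induction T using TensorProduct.induction_on with
  | zero => simp only [lie_zero, map_zero]
  | add S T hS hT => simp only [lie_add, map_add, hS, hT]
  | tmul a q =>
    induction q using TensorProduct.induction_on with
    | zero => simp only [TensorProduct.tmul_zero, lie_zero, map_zero]
    | add p q hp hq => simp only [TensorProduct.tmul_add, lie_add, map_add, hp, hq]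
    | tmul v u => exact on_tmul a v u

lemma maxTrivSubmodule_tensor_eq_bot_of_pairing_eq_zero
    (h : ∀ Φ : Dual R V →ₗ⁅R,𝔤⁆ (Dual R U →ₗ[R] A), Φ = 0) :
    maxTrivSubmodule R 𝔤 (A ⊗[R] (V ⊗[R] U)) = ⊥ := by
  refine (LieSubmodule.eq_bot_iff _).mpr fun T hT ↦ (contraction R A V U).map_eq_zero_iff.mp ?_
  have hinv : contraction R A V U T ∈
      maxTrivSubmodule R 𝔤 (Dual R V →ₗ[R] Dual R U →ₗ[R] A) := fun x ↦ by
    rw [← contraction_lie, hT x, map_zero]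
  have := h (maxTrivLinearMapEquivLieModuleHom ⟨_, hinv⟩)
  rw [LinearEquiv.map_eq_zero_iff] at this
  exact congrArg Subtype.val this

end Contraction

section Dual

variable {K 𝔤 V : Type*} [Field K] [LieRing 𝔤] [LieAlgebra K 𝔤] [AddCommGroup V] [Module K V]
  [LieRingModule 𝔤 V] [LieModule K 𝔤 V]

instance isIrreducible_dual [FiniteDimensional K V] [IsIrreducible K 𝔤 V] :
    IsIrreducible K 𝔤 (Dual K V) := by
  have := nontrivial_of_isIrreducible K 𝔤 V
  refine IsIrreducible.mk fun S hS ↦ ?_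
  let S₀ : LieSubmodule K 𝔤 V :=
    { (S : Submodule K (Dual K V)).dualCoannihilator with
      lie_mem := fun {x u} hu ↦ by
        refine (Submodule.mem_dualCoannihilator _).mpr fun ξ hξ ↦ ?_
        have := (Submodule.mem_dualCoannihilator u).mp hu ⁅x, ξ⁆ (S.lie_mem hξ)
        rwa [Dual.lie_apply, neg_eq_zero] at this }
  have hS₀ : (S₀ : Submodule K V).dualAnnihilator = S :=
    Subspace.dualCoannihilator_dualAnnihilator_eq
  rw [← LieSubmodule.toSubmodule_eq_top, ← hS₀]
  obtain h | h := eq_bot_or_eq_top S₀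
  · rw [h, LieSubmodule.bot_toSubmodule, Submodule.dualAnnihilator_bot]
  · rw [h, LieSubmodule.top_toSubmodule, Submodule.dualAnnihilator_top] at hS₀
    exact absurd (LieSubmodule.toSubmodule_eq_bot S |>.mp hS₀.symm) hS

lemma dual_eq_zero_of_isCyclicVector {P : Set 𝔤} {v : V} (hv : IsCyclicVector K P v)
    {ξ : Dual K V} (hξ : ∀ x ∈ P, ⁅x, ξ⁆ = 0) (h : ξ v = 0) : ξ = 0 := by
  refine LinearMap.ker_eq_top.mp (hv _ h fun x hx u _ ↦ ?_)
  have := LinearMap.congr_fun (hξ x hx) u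
  rwa [Dual.lie_apply, LinearMap.zero_apply, neg_eq_zero] at this

end Dual

section Complex

variable {𝔤 M : Type*} [LieRing 𝔤] [LieAlgebra ℂ 𝔤] [AddCommGroup M] [Module ℂ M]
  [LieRingModule 𝔤 M] [LieModule ℂ 𝔤 M] [FiniteDimensional ℂ M]

lemma exists_ne_zero_forall_lie_eq_zero [Nontrivial M] (d : 𝔤) {P : Set 𝔤}
    (hP : ∀ x ∈ P, ∃ c : ℂ, ⁅d, x⁆ = c • x ∧ 0 < c.re) :
    ∃ m : M, m ≠ 0 ∧ ∀ x ∈ P, ⁅x, m⁆ = 0 := by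
  -- The elements of `P` raise the real part of `d`-eigenvalues, so they kill an eigenvector for
  -- which it is maximal.
  let D : End ℂ M := toEnd ℂ 𝔤 M d
  obtain ⟨c₀, hc₀⟩ := End.exists_eigenvalue D
  have : Nonempty D.Eigenvalues := ⟨⟨c₀, hc₀⟩⟩
  obtain ⟨⟨a, ha⟩, hmax⟩ := Finite.exists_max fun b : D.Eigenvalues ↦ (b : ℂ).re
  obtain ⟨m, hm⟩ := End.HasEigenvalue.exists_hasEigenvector ha
  have hdm : ⁅d, m⁆ = a • m := hm.apply_eq_smul
  refine ⟨m, hm.2, fun x hx ↦ ?_⟩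
  obtain ⟨c, hdx, hc⟩ := hP x hx
  by_contra hxm
  have hdxm : D ⁅x, m⁆ = (c + a) • ⁅x, m⁆ := by
    change ⁅d, ⁅x, m⁆⁆ = _
    rw [leibniz_lie, hdx, hdm, smul_lie, lie_smul, add_smul]
  have hle : (c + a).re ≤ a.re :=
    hmax ⟨c + a, End.hasEigenvalue_of_hasEigenvector ⟨End.mem_eigenspace_iff.mpr hdxm, hxm⟩⟩
  rw [Complex.add_re] at hle
  linarith

variable {h e f : 𝔤}

lemma lie_f_eq_zero_of_lie_e_eq_zero (t : IsSl2Triple h e f) {m : M} (hm : ⁅h, m⁆ = 0)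
    (he : ⁅e, m⁆ = 0) : ⁅f, m⁆ = 0 := by
  by_cases hm0 : m = 0
  · rw [hm0, lie_zero]
  have P : t.HasPrimitiveVectorWith m (0 : ℂ) := ⟨hm0, by rw [hm, zero_smul], he⟩
  simpa using P.pow_toEnd_f_eq_zero_of_eq_nat (n := 0) Nat.cast_zero.symm

lemma lie_e_ne_zero_of_lie_h_eq_smul (t : IsSl2Triple h e f) {m : M} (hm0 : m ≠ 0) {c : ℂ}
    (hm : ⁅h, m⁆ = c • m) (hc : c.re < 0) : ⁅e, m⁆ ≠ 0 := by
  intro he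
  obtain ⟨n, rfl⟩ := (⟨hm0, hm, he⟩ : t.HasPrimitiveVectorWith m c).exists_nat
  exact absurd hc (by simp)

end Complex

section RootSystem

variable {H : LieSubalgebra ℂ L} [H.IsCartanSubalgebra] {r : ℕ} {α : Fin r → Dual ℂ H}

variable (H) in
/-- The root vectors for the roots that are positive relative to `α`; those for the negative roots
are `posRootVectors H (-α)`. -/
def posRootVectors (α : Fin r → Dual ℂ H) : Set L :=
  {x | ∃ χ, IsPosRoot H α χ ∧ x ∈ rootSpace H χ}

lemma IsBase.isPosRoot_or_isPosRoot_neg (hα : IsBase H α) {χ : Dual ℂ H} (hχ : IsRoot H χ) :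
    IsPosRoot H α χ ∨ IsPosRoot H (-α) χ :=
  (hα.pos_neg χ hχ).imp (⟨hχ, ·⟩) fun ⟨c, hc⟩ ↦ ⟨hχ, c, by simpa using hc⟩

variable [FiniteDimensional ℂ L]

lemma IsBase.exists_pos_re (hα : IsBase H α) :
    ∃ d : H, ∀ χ, IsPosRoot H α χ → 0 < (χ d).re := by
  obtain ⟨F, hF⟩ := LinearMap.exists_extend ((Basis.span hα.indep).constr ℂ fun _ ↦ (1 : ℂ))
  have hFα (i : Fin r) : F (α i) = 1 := by
    have := LinearMap.congr_fun hF (Basis.span hα.indep i)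
    rwa [Basis.constr_basis, LinearMap.comp_apply, Submodule.subtype_apply, Basis.span_apply]
      at this
  let d : H := (evalEquiv ℂ H).symm F
  have hαd (i : Fin r) : α i d = 1 := by rw [apply_evalEquiv_symm_apply, hFα]
  refine ⟨d, fun χ ⟨hχ, c, hc⟩ ↦ ?_⟩
  have hχd : χ d = ((∑ i, c i : ℕ) : ℂ) := by simp [hc, hαd]
  rw [hχd, Complex.natCast_re, Nat.cast_pos, Nat.pos_iff_ne_zero]
  intro hzero
  rw [Finset.sum_eq_zero_iff] at hzero
  exact hχ.1 (hc.trans (Finset.sum_eq_zero fun i hi ↦ by simp [hzero i hi]))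

lemma IsBase.eq_top_of_posRootVectors_subset (hα : IsBase H α) {S : Submodule ℂ L}
    (hH : ∀ h : H, (h : L) ∈ S) (hpos : posRootVectors H α ⊆ S)
    (hneg : posRootVectors H (-α) ⊆ S) : S = ⊤ := by
  refine eq_top_iff.mpr fun y _ ↦ ?_
  have hy : y ∈ ⨆ χ : Weight ℂ H L, rootSpace H χ :=
    iSup_genWeightSpace_eq_top' ℂ H L ▸ LieSubmodule.mem_top y
  induction hy using LieSubmodule.iSup_induction' with
  | mem χ y hy =>
    by_cases hχ : χ.IsZero
    · have hyH : y ∈ H := by simpa [hχ.eq] using hy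
      exact hH ⟨y, hyH⟩
    · have hroot : IsRoot H χ.toLinear :=
        ⟨fun h ↦ hχ (congrArg DFunLike.coe h), χ.genWeightSpace_ne_bot⟩
      obtain hχα | hχα := hα.isPosRoot_or_isPosRoot_neg hroot
      · exact hpos ⟨χ.toLinear, hχα, hy⟩
      · exact hneg ⟨χ.toLinear, hχα, hy⟩
  | zero => exact S.zero_mem
  | add a b _ _ ha hb => exact S.add_mem (ha trivial) (hb trivial)

variable [IsKilling ℂ L]

lemma mem_rootSpace_iff_forall_lie_eq_smul {χ : Dual ℂ H} {x : L} :
    x ∈ rootSpace H χ ↔ ∀ h : H, ⁅(h : L), x⁆ = χ h • x :=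
  ⟨fun hx h ↦ IsKilling.lie_eq_smul_of_mem_rootSpace hx h,
    fun hx ↦ (mem_genWeightSpace L χ x).mpr fun h ↦ ⟨1, by simp [hx h]⟩⟩

lemma pairing_apply_mem_rootSpace {M W : Type*} [AddCommGroup M] [Module ℂ M] [LieRingModule L M]
    [AddCommGroup W] [Module ℂ W] [LieRingModule L W] [LieModule ℂ L W]
    (Φ : M →ₗ⁅ℂ,L⁆ (W →ₗ[ℂ] L)) {μ ν : Dual ℂ H} {m : M} {w : W}
    (hm : ∀ h : H, ⁅(h : L), m⁆ = μ h • m) (hw : ∀ h : H, ⁅(h : L), w⁆ = ν h • w) :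
    Φ m w ∈ rootSpace H ⇑(μ + ν) :=
  mem_rootSpace_iff_forall_lie_eq_smul.mpr fun h ↦ by
    rw [lie_pairing_apply, hm, hw, map_smul, LinearMap.smul_apply, map_smul, ← add_smul,
      LinearMap.add_apply]

lemma IsRoot.neg {χ : Dual ℂ H} (hχ : IsRoot H χ) : IsRoot H (-χ) :=
  ⟨neg_ne_zero.mpr hχ.1, (-(⟨χ, hχ.2⟩ : Weight ℂ H L)).genWeightSpace_ne_bot⟩

lemma IsBase.neg (hα : IsBase H α) : IsBase H (-α) where
  isRoot j := (hα.isRoot j).neg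
  indep := hα.indep.neg
  pos_neg χ hχ := by
    simpa only [Pi.neg_apply, smul_neg, Finset.sum_neg_distrib, neg_neg] using
      (hα.pos_neg χ hχ).symm

lemma IsPosRoot.neg {χ : Dual ℂ H} (hχ : IsPosRoot H α χ) : IsPosRoot H (-α) (-χ) :=
  ⟨hχ.1.neg, hχ.2.imp fun c hc ↦ by simp [hc]⟩

lemma IsCoroot.exists_isSl2Triple {γ : Dual ℂ H} {t : H} (ht : IsCoroot H γ t) :
    ∃ e ∈ rootSpace H γ, ∃ f ∈ rootSpace H ⇑(-γ), IsSl2Triple (t : L) e f := by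
  obtain ⟨hγt, e, he, f, hf, hef⟩ := ht
  refine ⟨e, he, f, hf, fun h ↦ ?_, hef.symm, ?_, ?_⟩
  · simp [show t = 0 from Subtype.ext h] at hγt
  · rw [mem_rootSpace_iff_forall_lie_eq_smul.mp he, hγt, ofNat_smul_eq_nsmul]
  · rw [mem_rootSpace_iff_forall_lie_eq_smul.mp hf, LinearMap.neg_apply, hγt, neg_smul,
      ofNat_smul_eq_nsmul]

lemma IsCoroot.isRoot {γ : Dual ℂ H} {t : H} (ht : IsCoroot H γ t) : IsRoot H γ := by
  obtain ⟨e, he, f, -, T⟩ := ht.exists_isSl2Triple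
  refine ⟨fun h ↦ ?_, fun hbot ↦ T.e_ne_zero ((LieSubmodule.eq_bot_iff _).mp hbot e he)⟩
  simpa [h] using ht.1

lemma IsCoroot.apply_eq_zero_of_isKillingDual {γ β : Dual ℂ H} {t s : H} (ht : IsCoroot H γ t)
    (hs : IsKillingDual H γ s) (hβ : β s = 0) : β t = 0 := by
  have hs' : s = (IsKilling.cartanEquivDual H).symm γ := by
    rw [LinearEquiv.eq_symm_apply]
    exact LinearMap.ext hs
  obtain ⟨-, e, he, f, hf, hef⟩ := id ht
  have := IsKilling.lie_eq_killingForm_smul_of_mem_rootSpace_of_mem_rootSpace_neg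
    (α := ⟨γ, ht.isRoot.2⟩) he hf
  have hts : t = killingForm ℂ L e f • s := by
    rw [hs']
    exact Subtype.ext (hef.trans this)
  rw [hts, map_smul, hβ, smul_zero]

lemma eq_zero_of_killingForm_eq_zero {β : Dual ℂ H} (hβ : β ≠ 0) {z y : L}
    (hz : z ∈ rootSpace H β) (hy : y ∈ rootSpace H ⇑(-β)) (hy0 : y ≠ 0)
    (hzy : killingForm ℂ L z y = 0) : z = 0 := by
  let χ : Weight ℂ H L := ⟨⇑(-β), fun h ↦ hy0 ((LieSubmodule.eq_bot_iff _).mp h y hy)⟩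
  have hχ : χ.IsNonZero := fun h ↦ hβ (neg_eq_zero.mp (DFunLike.coe_injective h))
  have hker : z ∈ LinearMap.ker (killingForm ℂ L) := by
    refine mem_ker_killingForm_of_mem_rootSpace_of_forall_rootSpace_neg ℂ L H hz fun u hu ↦ ?_
    obtain ⟨c, hc⟩ := (finrank_eq_one_iff_of_nonzero' (⟨y, hy⟩ : rootSpace H χ)
      (fun h ↦ hy0 (congrArg Subtype.val h))).mp (IsKilling.finrank_rootSpace_eq_one χ hχ) ⟨u, hu⟩
    rw [← show c • y = u from congrArg Subtype.val hc, map_smul, hzy, smul_zero]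
  simpa using hker

lemma eq_zero_of_lie_eq_zero_of_mem_rootSpace {γ β : Dual ℂ H} {t : H} {e f z : L}
    (T : IsSl2Triple (t : L) e f) (he : e ∈ rootSpace H γ) (hγt : γ t = 2) (hβ : β ≠ 0)
    (hβt : β t = 0) (hsum : IsRoot H (β + γ)) (hz : z ∈ rootSpace H β) (hez : ⁅e, z⁆ = 0) :
    z = 0 := by
  obtain ⟨y, hy, hy0⟩ : ∃ y ∈ rootSpace H ⇑(-(β + γ)), y ≠ 0 := by
    by_contra! hcon
    exact hsum.neg.2 ((LieSubmodule.eq_bot_iff _).mpr hcon)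
  have hy_lie := mem_rootSpace_iff_forall_lie_eq_smul.mp hy
  have hey : ⁅e, y⁆ ≠ 0 := lie_e_ne_zero_of_lie_h_eq_smul T hy0 (hy_lie t) (by simp [hγt, hβt])
  have hey_mem : ⁅e, y⁆ ∈ rootSpace H ⇑(-β) := mem_rootSpace_iff_forall_lie_eq_smul.mpr fun h ↦ by
    rw [leibniz_lie, mem_rootSpace_iff_forall_lie_eq_smul.mp he, hy_lie, lie_smul, smul_lie,
      ← add_smul]
    congr 1
    simp
  -- `κ(z, ⁅e, y⁆) = -κ(⁅e, z⁆, y)`, and `⁅e, y⁆` spans the root space dual to that of `z`.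
  refine eq_zero_of_killingForm_eq_zero hβ hz hey_mem hey ?_
  rw [killingForm, ← traceForm_apply_lie_apply, ← lie_skew, hez, neg_zero, map_zero,
    LinearMap.zero_apply]

end RootSystem

section HighestWeight

/-- A highest weight vector of weight `μ` relative to `α`. Relative to `-α` these are the lowest
weight vectors. -/
structure IsHighestWeightVector (H : LieSubalgebra ℂ L) [H.IsCartanSubalgebra] {r : ℕ}
    (α : Fin r → Dual ℂ H) (μ : Dual ℂ H) {V : Type*} [AddCommGroup V] [Module ℂ V]
    [LieRingModule L V] (v : V) : Prop where
  ne_zero : v ≠ 0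
  lie_eq_smul (h : H) : ⁅(h : L), v⁆ = μ h • v
  lie_eq_zero (x) (hx : x ∈ posRootVectors H α) : ⁅x, v⁆ = 0

variable {H : LieSubalgebra ℂ L} [H.IsCartanSubalgebra]
  {r : ℕ} {α : Fin r → Dual ℂ H} {μ : Dual ℂ H}
  {V W : Type} [AddCommGroup V] [Module ℂ V] [LieRingModule L V] [LieModule ℂ L V]
  [AddCommGroup W] [Module ℂ W] [LieRingModule L W]

lemma IsDualPair.nonempty_equiv_dual [FiniteDimensional ℂ V] (hWV : IsDualPair (L := L) W V) :
    Nonempty (W ≃ₗ⁅ℂ,L⁆ Dual ℂ V) := by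
  obtain ⟨B, hW, hV, hB⟩ := hWV
  have : B.IsPerfPair := .of_injective'
    ((injective_iff_map_eq_zero B).mpr fun w hw ↦ hW w (LinearMap.congr_fun hw))
    ((injective_iff_map_eq_zero B.flip).mpr fun v hv ↦ hV v (LinearMap.congr_fun hv))
  exact ⟨{ B.toPerfPair with
    map_lie' := fun {x w} ↦ LinearMap.ext fun v ↦ eq_neg_of_add_eq_zero_left (hB x w v) }⟩

lemma isHWIrrep_iff : IsHWIrrep H α μ V ↔
    IsIrreducible ℂ L V ∧ ∃ v : V, IsHighestWeightVector H α μ v :=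
  and_congr_right' <| exists_congr fun _ ↦
    ⟨fun ⟨h₁, h₂, h₃⟩ ↦ ⟨h₁, h₂, fun x ⟨χ, hχ, hx⟩ ↦ h₃ χ hχ x hx⟩,
      fun h ↦ ⟨h.1, h.2, fun χ hχ x hx ↦ h.3 x ⟨χ, hχ, hx⟩⟩⟩

lemma IsHWIrrep.congr [LieModule ℂ L W] (hV : IsHWIrrep H α μ V) (φ : V ≃ₗ⁅ℂ,L⁆ W) :
    IsHWIrrep H α μ W := by
  obtain ⟨hirr, v, hv⟩ := isHWIrrep_iff.mp hV
  refine isHWIrrep_iff.mpr ⟨(LieSubmodule.orderIsoMapComap φ).symm.isSimpleOrder, φ v, ?_, ?_, ?_⟩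
  · exact (map_ne_zero_iff φ φ.injective).mpr hv.ne_zero
  · intro h
    rw [← LieModuleEquiv.coe_toLieModuleHom, ← LieModuleHom.map_lie, hv.lie_eq_smul, map_smul]
  · intro x hx
    rw [← LieModuleEquiv.coe_toLieModuleHom, ← LieModuleHom.map_lie, hv.lie_eq_zero x hx, map_zero]

variable [FiniteDimensional ℂ L]

lemma IsHighestWeightVector.isCyclicVector [IsIrreducible ℂ L V] (hα : IsBase H α) {v : V}
    (hv : IsHighestWeightVector H α μ v) : IsCyclicVector ℂ (posRootVectors H (-α)) v := by
  refine isCyclicVector_of_isIrreducible hv.ne_zero fun K hvK hK y ↦ ?_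
  let S : Submodule ℂ L := K.comap ((toEnd ℂ L V : L →ₗ[ℂ] End ℂ V).flip v)
  have hS : S = ⊤ := hα.eq_top_of_posRootVectors_subset
    (fun h ↦ show ⁅(h : L), v⁆ ∈ K from hv.lie_eq_smul h ▸ K.smul_mem _ hvK)
    (fun x hx ↦ show ⁅x, v⁆ ∈ K from hv.lie_eq_zero x hx ▸ K.zero_mem)
    (fun x hx ↦ hK x hx v hvK)
  exact (hS ▸ Submodule.mem_top : y ∈ S)

variable [IsKilling ℂ L]

lemma IsHighestWeightVector.lie_eq_zero_of_isSl2Triple [FiniteDimensional ℂ V] (hα : IsBase H α)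
    {v : V} (hv : IsHighestWeightVector H α μ v) {γ : Dual ℂ H} (hγ : IsRoot H γ) {t : H}
    {e f : L} (T : IsSl2Triple (t : L) e f) (he : e ∈ rootSpace H γ) (hf : f ∈ rootSpace H ⇑(-γ))
    (hμ : μ t = 0) : ⁅e, v⁆ = 0 := by
  obtain hpos | hneg := hα.isPosRoot_or_isPosRoot_neg hγ
  · exact hv.lie_eq_zero e ⟨γ, hpos, he⟩
  · have hfv : ⁅f, v⁆ = 0 := hv.lie_eq_zero f ⟨-γ, by simpa using hneg.neg, hf⟩
    exact lie_f_eq_zero_of_lie_e_eq_zero T.symm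
      (by rw [neg_lie, hv.lie_eq_smul, hμ, zero_smul, neg_zero]) hfv

lemma IsHighestWeightVector.exists_dual [FiniteDimensional ℂ V] [IsIrreducible ℂ L V]
    (hα : IsBase H α) {v : V} (hv : IsHighestWeightVector H α μ v) :
    ∃ ξ : Dual ℂ V, IsHighestWeightVector H (-α) (-μ) ξ := by
  have := nontrivial_of_isIrreducible ℂ L (Dual ℂ V)
  obtain ⟨d, hd⟩ := hα.neg.exists_pos_re
  obtain ⟨ξ, hξ0, hξ⟩ := exists_ne_zero_forall_lie_eq_zero (M := Dual ℂ V) (d : L)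
    fun x (hx : x ∈ posRootVectors H (-α)) ↦ hx.elim fun χ ⟨hχ, hx⟩ ↦
      ⟨χ d, mem_rootSpace_iff_forall_lie_eq_smul.mp hx d, hd χ hχ⟩
  refine ⟨ξ, hξ0, fun h ↦ ?_, hξ⟩
  have hker : ⁅(h : L), ξ⁆ + μ h • ξ = 0 := by
    refine dual_eq_zero_of_isCyclicVector (hv.isCyclicVector hα) (fun x hx ↦ ?_) ?_
    · obtain ⟨χ, -, hxχ⟩ := id hx
      rw [lie_add, lie_smul, hξ x hx, smul_zero, add_zero, leibniz_lie, hξ x hx, lie_zero,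
        add_zero, ← lie_skew, mem_rootSpace_iff_forall_lie_eq_smul.mp hxχ, neg_lie, smul_lie,
        hξ x hx, smul_zero, neg_zero]
    · simp [Dual.lie_apply, hv.lie_eq_smul]
  rw [LinearMap.neg_apply, neg_smul]
  exact eq_neg_of_add_eq_zero_left hker

lemma IsHighestWeightVector.pairing_eq_zero [LieModule ℂ L W] [IsIrreducible ℂ L V]
    [IsIrreducible ℂ L W] (hα : IsBase H α) {ν : Dual ℂ H} {v : V} {w : W}
    (hv : IsHighestWeightVector H (-α) μ v) (hw : IsHighestWeightVector H α ν w)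
    (Φ : V →ₗ⁅ℂ,L⁆ (W →ₗ[ℂ] L)) (h : Φ v w = 0) : Φ = 0 := by
  have hcyc : IsCyclicVector ℂ (posRootVectors H α) v := by
    simpa only [neg_neg] using hv.isCyclicVector hα.neg
  exact pairing_eq_zero_of_isIrreducible Φ hw.ne_zero
    (pairing_apply_eq_zero_of_isCyclicVector Φ hcyc hw.lie_eq_zero h)

end HighestWeight

theorem statement5_general
    {L : Type} [LieRing L] [LieAlgebra ℂ L] [FiniteDimensional ℂ L]
    [LieAlgebra.IsSemisimple ℂ L]
    (H : LieSubalgebra ℂ L) [H.IsCartanSubalgebra]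
    {r : ℕ} (α : Fin r → Dual ℂ H) (hbase : IsBase H α)
    (γ : Dual ℂ H) (t : H) (hcoroot : IsCoroot H γ t)
    (μ νbar : Dual ℂ H)
    (Vμ : Type) [AddCommGroup Vμ] [Module ℂ Vμ] [LieRingModule L Vμ]
    [LieModule ℂ L Vμ] [FiniteDimensional ℂ Vμ]
    (Vν : Type) [AddCommGroup Vν] [Module ℂ Vν] [LieRingModule L Vν]
    [LieModule ℂ L Vν] [FiniteDimensional ℂ Vν]
    (Wν : Type) [AddCommGroup Wν] [Module ℂ Wν] [LieRingModule L Wν] [LieModule ℂ L Wν]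
    (hVμ : IsHWIrrep H α μ Vμ) (hWν : IsHWIrrep H α νbar Wν)
    (hdual : IsDualPair (L := L) Wν Vν)
    (hne : νbar ≠ μ) (hμ : μ t = 0)
    (horth : ∃ s : H, IsKillingDual H γ s ∧ (νbar - μ) s = 0)
    (hsum : IsRoot H ((νbar - μ) + γ)) :
    maxTrivSubmodule ℂ L (L ⊗[ℂ] (Vμ ⊗[ℂ] Vν)) = ⊥ := by
  obtain ⟨s, hs, hβs⟩ := horth
  have hβt : (νbar - μ) t = 0 := hcoroot.apply_eq_zero_of_isKillingDual hs hβs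
  have hνt : νbar t = 0 := by rwa [LinearMap.sub_apply, hμ, sub_zero] at hβt
  obtain ⟨_, v, hv⟩ := isHWIrrep_iff.mp hVμ
  obtain ⟨ξ, hξ⟩ := hv.exists_dual hbase
  obtain ⟨φ⟩ := hdual.nonempty_equiv_dual
  obtain ⟨_, w, hw⟩ := isHWIrrep_iff.mp (hWν.congr φ)
  obtain ⟨e, he, f, hf, T⟩ := hcoroot.exists_isSl2Triple
  have heξ : ⁅e, ξ⁆ = 0 := hξ.lie_eq_zero_of_isSl2Triple hbase.neg hcoroot.isRoot T he hf
    (by rw [LinearMap.neg_apply, hμ, neg_zero])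
  have hew : ⁅e, w⁆ = 0 := hw.lie_eq_zero_of_isSl2Triple hbase hcoroot.isRoot T he hf hνt
  refine maxTrivSubmodule_tensor_eq_bot_of_pairing_eq_zero fun Φ ↦ hξ.pairing_eq_zero hbase hw Φ ?_
  have hmem : Φ ξ w ∈ rootSpace H ⇑(νbar - μ) :=
    neg_add_eq_sub μ νbar ▸ pairing_apply_mem_rootSpace Φ hξ.lie_eq_smul hw.lie_eq_smul
  have hlie : ⁅e, Φ ξ w⁆ = 0 := by
    rw [lie_pairing_apply, heξ, hew, map_zero, map_zero, LinearMap.zero_apply, add_zero]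
  exact eq_zero_of_lie_eq_zero_of_mem_rootSpace T he hcoroot.1 (sub_ne_zero.mpr hne) hβt hsum
    hmem hlie

/-- Suppose `β := ν̄ - μ` is a root, and there is a short simple root
`α_j` (some root of the same simple factor is strictly longer) with `⟨μ, α_j∨⟩ = 0` such
that `β` is weakly orthogonal to `α_j` (`⟨β, α_j⟩ = 0` and `β + α_j` is a root).  Then the
`𝔤`-invariant subspace of `adj(𝔤) ⊗ V_μ ⊗ V_ν` is zero. -/
theorem statement5
    {L : Type} [LieRing L] [LieAlgebra ℂ L] [FiniteDimensional ℂ L]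
    [LieAlgebra.IsSemisimple ℂ L]
    (H : LieSubalgebra ℂ L) [H.IsCartanSubalgebra]
    {r : ℕ} (α : Fin r → Module.Dual ℂ H) (hc : Fin r → H)
    (hbase : IsBase H α) (hcoroot : ∀ j, IsCoroot H (α j) (hc j))
    (μ ν νbar : Module.Dual ℂ H) (hμ : IsDomInt hc μ) (hν : IsDomInt hc ν)
    (Vμ : Type) [AddCommGroup Vμ] [Module ℂ Vμ] [LieRingModule L Vμ]
    [LieModule ℂ L Vμ] [FiniteDimensional ℂ Vμ]
    (Vν : Type) [AddCommGroup Vν] [Module ℂ Vν] [LieRingModule L Vν]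
    [LieModule ℂ L Vν] [FiniteDimensional ℂ Vν]
    (Wν : Type) [AddCommGroup Wν] [Module ℂ Wν] [LieRingModule L Wν]
    [LieModule ℂ L Wν] [FiniteDimensional ℂ Wν]
    (hVμ : IsHWIrrep H α μ Vμ)
    (hVν : IsHWIrrep H α ν Vν) (hWν : IsHWIrrep H α νbar Wν)
    (hdual : IsDualPair (L := L) Wν Vν)
    (hroot : IsRoot H (νbar - μ))
    (j : Fin r)
    (hshort : ∃ (γ : Module.Dual ℂ H) (tα tγ : H), IsRoot H γ ∧ SameFactor H (α j) γ ∧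
      IsKillingDual H (α j) tα ∧ IsKillingDual H γ tγ ∧
      ∃ a b : ℝ, (α j) tα = (a : ℂ) ∧ γ tγ = (b : ℂ) ∧ a < b)
    (hμj : μ (hc j) = 0)
    (horth : ∃ tα : H, IsKillingDual H (α j) tα ∧ (νbar - μ) tα = 0)
    (hsum : IsRoot H ((νbar - μ) + α j)) :
    maxTrivSubmodule ℂ L (L ⊗[ℂ] (Vμ ⊗[ℂ] Vν)) = ⊥ :=
  statement5_general H α hbase (α j) (hc j) (hcoroot j) μ νbar Vμ Vν Wν hVμ hWν hdual
    (sub_ne_zero.mp hroot.1) hμj horth hsum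

end AdjPaper
end
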